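/- Let V be a simple cuspidal module over the N=2 Ramond algebra 𝔤. Then dim(V_λ ∩ V_τ) ≤ 2 for every λ ∈ ℂ and every parity τ ∈ {0,1}. -/

import Mathlib

open Submodule

/-- A module over the `N = 2` Ramond algebra `𝔤`: a `ℤ/2`-graded complex vector
space `V = even ⊕ odd` with parity-preserving operators `L m`, `H m`,
parity-reversing operators `Gp m` (`G_m^+`), `Gm m` (`G_m^-`), and a scalar `c₀`
(the action of the central element `C`), subject to the defining relations. -/
structure RamondRep (V : Type) [AddCommGroup V] [Module ℂ V] : Type where
  L : ℤ → V →ₗ[ℂ] V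
  H : ℤ → V →ₗ[ℂ] V
  Gp : ℤ → V →ₗ[ℂ] V
  Gm : ℤ → V →ₗ[ℂ] V
  c₀ : ℂ
  even : Submodule ℂ V
  odd : Submodule ℂ V
  grading : IsCompl even odd
  L_even : ∀ (m : ℤ), ∀ v ∈ even, L m v ∈ even
  L_odd : ∀ (m : ℤ), ∀ v ∈ odd, L m v ∈ odd
  H_even : ∀ (m : ℤ), ∀ v ∈ even, H m v ∈ even
  H_odd : ∀ (m : ℤ), ∀ v ∈ odd, H m v ∈ odd
  Gp_even : ∀ (m : ℤ), ∀ v ∈ even, Gp m v ∈ odd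
  Gp_odd : ∀ (m : ℤ), ∀ v ∈ odd, Gp m v ∈ even
  Gm_even : ∀ (m : ℤ), ∀ v ∈ even, Gm m v ∈ odd
  Gm_odd : ∀ (m : ℤ), ∀ v ∈ odd, Gm m v ∈ even
  rel_LL : ∀ (m n : ℤ) (v : V),
    L m (L n v) - L n (L m v) =
      ((n : ℂ) - (m : ℂ)) • L (m + n) v +
        ((1 / 12 : ℂ) * ((n : ℂ) ^ 3 - (n : ℂ)) *
          (if m + n = 0 then (1 : ℂ) else 0) * c₀) • v
  rel_HH : ∀ (m n : ℤ) (v : V),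
    H m (H n v) - H n (H m v) =
      ((1 / 3 : ℂ) * (m : ℂ) * (if m + n = 0 then (1 : ℂ) else 0) * c₀) • v
  rel_LH : ∀ (m n : ℤ) (v : V),
    L m (H n v) - H n (L m v) = (n : ℂ) • H (m + n) v
  rel_LGp : ∀ (m p : ℤ) (v : V),
    L m (Gp p v) - Gp p (L m v) = ((p : ℂ) - (m : ℂ) / 2) • Gp (p + m) v
  rel_LGm : ∀ (m p : ℤ) (v : V),
    L m (Gm p v) - Gm p (L m v) = ((p : ℂ) - (m : ℂ) / 2) • Gm (p + m) v
  rel_HGp : ∀ (m p : ℤ) (v : V),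
    H m (Gp p v) - Gp p (H m v) = Gp (m + p) v
  rel_HGm : ∀ (m p : ℤ) (v : V),
    H m (Gm p v) - Gm p (H m v) = -(Gm (m + p) v)
  rel_GpGm : ∀ (p q : ℤ) (v : V),
    Gp p (Gm q v) + Gm q (Gp p v) =
      (-2 : ℂ) • L (p + q) v + ((p : ℂ) - (q : ℂ)) • H (p + q) v +
        ((1 / 3 : ℂ) * ((p : ℂ) ^ 2 - 1 / 4) *
          (if p + q = 0 then (1 : ℂ) else 0) * c₀) • v
  rel_GpGp : ∀ (p q : ℤ) (v : V), Gp p (Gp q v) + Gp q (Gp p v) = 0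
  rel_GmGm : ∀ (p q : ℤ) (v : V), Gm p (Gm q v) + Gm q (Gm p v) = 0

namespace RamondRep

variable {V : Type} [AddCommGroup V] [Module ℂ V]

/-- The weight space `V_μ = {v ∈ V : L₀ v = μ v}`. -/
def wt (ρ : RamondRep V) (μ : ℂ) : Submodule ℂ V :=
  Module.End.eigenspace (ρ.L 0) μ

/-- The parity components, indexed by `ZMod 2`. -/
def parity (ρ : RamondRep V) (τ : ZMod 2) : Submodule ℂ V :=
  if τ = 0 then ρ.even else ρ.odd

/-- `V` is a weight module: it is the sum of its weight spaces. -/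
def IsWeight (ρ : RamondRep V) : Prop := (⨆ μ : ℂ, ρ.wt μ) = ⊤

/-- `V` is cuspidal: a weight module with uniformly bounded weight multiplicities
in each parity. -/
def Cuspidal (ρ : RamondRep V) : Prop :=
  ρ.IsWeight ∧ ∃ p : ℕ, ∀ (μ : ℂ) (τ : ZMod 2),
    Module.rank ℂ ↥(ρ.wt μ ⊓ ρ.parity τ) ≤ (p : Cardinal)

/-- A subspace invariant under all the operators. -/
def IsSubmod (ρ : RamondRep V) (W : Submodule ℂ V) : Prop :=
  (∀ (m : ℤ), ∀ v ∈ W, ρ.L m v ∈ W) ∧ (∀ (m : ℤ), ∀ v ∈ W, ρ.H m v ∈ W) ∧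
    (∀ (m : ℤ), ∀ v ∈ W, ρ.Gp m v ∈ W) ∧ (∀ (m : ℤ), ∀ v ∈ W, ρ.Gm m v ∈ W)

/-- A graded subspace invariant under all the operators. -/
def IsGradedSubmod (ρ : RamondRep V) (W : Submodule ℂ V) : Prop :=
  ρ.IsSubmod W ∧ W = (W ⊓ ρ.even) ⊔ (W ⊓ ρ.odd)

/-- The trivial representation: all operators act by zero. -/
def IsTrivialRep (ρ : RamondRep V) : Prop :=
  ∀ (m : ℤ) (v : V), ρ.L m v = 0 ∧ ρ.H m v = 0 ∧ ρ.Gp m v = 0 ∧ ρ.Gm m v = 0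

/-- `V` is simple: nontrivial, and its only graded submodules are `⊥` and `⊤`. -/
def IsSimple (ρ : RamondRep V) : Prop :=
  ¬ ρ.IsTrivialRep ∧
    ∀ W : Submodule ℂ V, ρ.IsGradedSubmod W → W = ⊥ ∨ W = ⊤

/-- `V` is generated by `v` as a `𝔤`-module. -/
def GeneratedBy (ρ : RamondRep V) (v : V) : Prop :=
  ∀ W : Submodule ℂ V, ρ.IsSubmod W → v ∈ W → W = ⊤

/-- `V` is a highest weight module. -/
def IsHighestWeight (ρ : RamondRep V) : Prop :=
  ∃ v : V, v ≠ 0 ∧ ρ.GeneratedBy v ∧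
    (∃ h h' : ℂ, ρ.L 0 v = h • v ∧ ρ.H 0 v = h' • v) ∧
    (∀ m : ℤ, 0 < m → ρ.L m v = 0 ∧ ρ.H m v = 0 ∧ ρ.Gp m v = 0 ∧ ρ.Gm m v = 0) ∧
    ρ.Gp 0 v = 0

/-- `V` is a lowest weight module. -/
def IsLowestWeight (ρ : RamondRep V) : Prop :=
  ∃ v : V, v ≠ 0 ∧ ρ.GeneratedBy v ∧
    (∃ h h' : ℂ, ρ.L 0 v = h • v ∧ ρ.H 0 v = h' • v) ∧
    (∀ m : ℤ, m < 0 → ρ.L m v = 0 ∧ ρ.H m v = 0 ∧ ρ.Gp m v = 0 ∧ ρ.Gm m v = 0) ∧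
    ρ.Gm 0 v = 0

end RamondRep


theorem ks_nilp {E : Type*} [AddCommGroup E] [Module ℂ E] [FiniteDimensional ℂ E]
    (D B C : Module.End ℂ E) (h : D * B - B * D = C) (hc : C * B = B * C) : IsNilpotent C := by
  have hcB : ∀ p : Polynomial ℂ, C * Polynomial.aeval B p = Polynomial.aeval B p * C := by
    intro p
    induction p using Polynomial.induction_on' with
    | add p q hp hq => rw [map_add, mul_add, add_mul, hp, hq]
    | monomial n a =>
      rw [Polynomial.aeval_monomial]
      have h1 : Commute C (B ^ n) := Commute.pow_right hc n
      have h2 : Commute C (algebraMap ℂ (Module.End ℂ E) a) := Algebra.commute_algebraMap_right a C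
      exact (h2.mul_right h1).eq
  have hD : ∀ p : Polynomial ℂ, D * Polynomial.aeval B p - Polynomial.aeval B p * D
      = Polynomial.aeval B (Polynomial.derivative p) * C := by
    intro p
    induction p using Polynomial.induction_on with
    | C a =>
      simp only [Polynomial.aeval_C, Polynomial.derivative_C, map_zero, zero_mul]
      rw [(Algebra.commute_algebraMap_right a D).eq, sub_self]
    | add p q hp hq =>
      simp only [map_add, mul_add, add_mul]
      rw [← hp, ← hq]; abel
    | monomial n a ih =>
      rw [pow_succ, ← mul_assoc]
      generalize Polynomial.C a * Polynomial.X ^ n = q at ih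
      have h1 := hcB q
      simp only [map_mul, Polynomial.aeval_X, Polynomial.derivative_mul, Polynomial.derivative_X,
        mul_one, map_add]
      have e1 : D * (Polynomial.aeval B q * B) - Polynomial.aeval B q * B * D
        = (D * Polynomial.aeval B q - Polynomial.aeval B q * D) * B
          + Polynomial.aeval B q * (D * B - B * D) := by noncomm_ring
      rw [e1, ih, h, add_mul, mul_assoc, hc, ← mul_assoc]
  have key : ∀ n : ℕ, ∀ p : Polynomial ℂ, p ≠ 0 → p.natDegree ≤ n →
      ∀ M : ℕ, Polynomial.aeval B p * C ^ M = 0 → IsNilpotent C := by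
    intro n
    induction n with
    | zero =>
      intro p hp hn M hM
      rw [Polynomial.eq_C_of_natDegree_le_zero hn] at hM hp
      have h0 : p.coeff 0 ≠ 0 := by
        intro h0; rw [h0] at hp; simp at hp
      rw [Polynomial.aeval_C, Algebra.algebraMap_eq_smul_one, smul_mul_assoc, one_mul] at hM
      exact ⟨M, (smul_eq_zero.1 hM).resolve_left h0⟩
    | succ n ih =>
      intro p hp hn M hM
      by_cases hd : p.natDegree = 0
      · exact ih p hp (by omega) M hM
      have hp' : Polynomial.derivative p ≠ 0 := by
        intro h0
        exact hd (Polynomial.derivative_eq_zero.1 h0)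
      refine ih _ hp' (by have := Polynomial.natDegree_derivative_lt hd; omega) (2 * M + 1) ?_
      have h1 := hD p
      have hcM : Commute (C ^ M) (Polynomial.aeval B p) :=
        Commute.pow_left (show Commute C _ from hcB p) M
      have hcM' : Commute (C ^ M) (Polynomial.aeval B (Polynomial.derivative p)) :=
        Commute.pow_left (show Commute C _ from hcB _) M
      have e : Polynomial.aeval B (Polynomial.derivative p) * C ^ (2 * M + 1)
        = C ^ M * (Polynomial.aeval B (Polynomial.derivative p) * C) * C ^ M := by
        rw [show 2 * M + 1 = M + 1 + M by ring, pow_add, pow_add, pow_one,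
          ← mul_assoc, ← mul_assoc, ← mul_assoc, hcM'.eq]
      rw [e, ← h1]
      have e2 : C ^ M * (D * Polynomial.aeval B p - Polynomial.aeval B p * D) * C ^ M
        = C ^ M * D * (Polynomial.aeval B p * C ^ M)
          - (C ^ M * Polynomial.aeval B p) * D * C ^ M := by noncomm_ring
      rw [e2, hcM.eq, hM]
      simp
  exact key _ (minpoly ℂ B) (minpoly.ne_zero (Algebra.IsIntegral.isIntegral B)) le_rfl 0
    (by simp [minpoly.aeval])

theorem rad_stable {S : Type*} [CommRing S] [Algebra ℂ S] (I : Ideal S) (δ : Derivation ℂ S S)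
    (hI : ∀ f ∈ I, δ f ∈ I) : ∀ f ∈ I.radical, δ f ∈ I.radical := by
  rintro f ⟨n, hn⟩
  have key : ∀ k ≤ n, f ^ (n - k) * (δ f) ^ (2 * k) ∈ I := by
    intro k
    induction k with
    | zero => intro _; simpa using hn
    | succ k ih =>
      intro hk
      have h1 := ih (by omega)
      have h2 := I.mul_mem_left (δ f) (hI _ h1)
      obtain ⟨r, hr⟩ : ∃ r, n - k = r + 1 := ⟨n - k - 1, by omega⟩
      have hr' : n - (k + 1) = r := by omega
      rw [hr'] 
      rw [hr] at h1 h2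
      rw [Derivation.leibniz, Derivation.leibniz_pow, Derivation.leibniz_pow] at h2
      have h3 : δ f * (f ^ (r + 1) • ((2 * k) • (δ f) ^ (2 * k - 1) • δ (δ f))) ∈ I := by
        rcases k with _ | k
        · simp
        · have := I.mul_mem_left (((2 * (k + 1) : ℕ) : S) * δ (δ f)) h1
          convert this using 1
          have e : 2 * (k + 1) - 1 = 2 * k + 1 := by omega
          rw [e]
          simp only [smul_eq_mul, nsmul_eq_mul]
          ring
      rw [mul_add] at h2
      have h4 := (I.add_mem_iff_right h3).1 h2
      have h5 := I.mul_mem_left (algebraMap ℂ S (((r : ℂ) + 1)⁻¹)) h4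
      convert h5 using 1
      have : algebraMap ℂ S (((r : ℂ) + 1)⁻¹) * ((r + 1 : ℕ) : S) = 1 := by
        have : ((r + 1 : ℕ) : S) = algebraMap ℂ S ((r + 1 : ℕ) : ℂ) := by simp
        rw [this, ← map_mul]
        rw [Nat.cast_add_one, inv_mul_cancel₀ (Nat.cast_add_one_ne_zero r), map_one]
      simp only [smul_eq_mul, nsmul_eq_mul, Nat.add_sub_cancel]
      linear_combination (-(f ^ r * (δ f) ^ (2 * (k + 1)))) * this
  have := key n le_rfl
  simp at this
  exact ⟨_, this⟩

theorem ring_part {Q : Type*} [CommRing Q] (x : ℤ → Q)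
    (canc : ∀ k : ℤ, ∀ y : Q, y * x k = 0 → y = 0)
    (even : ∀ m k : ℤ, k ≠ 0 → x (m + k) * x (-m) = x m * x (k - m))
    (spec : x 3 * x (-1) = x 2 * x 0) (a b : ℤ) : 
    x a * x b = x 0 * x (a + b) := by
  have e1 : x 2 * x (-1) = x 1 * x 0 := by simpa using even 1 1 (by norm_num)
  have e2 : x 3 * x (-1) = x 1 * x 1 := by simpa using even 1 2 (by norm_num)
  have e3 : x 1 * x (-1) = x 0 * x 0 := by
    have := canc 2 (x 1 * x (-1) - x 0 * x 0) (by linear_combination x 1 * e1 + x 0 * (spec - e2))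
    linear_combination this
  have c0 : ∀ k : ℤ, ∀ y z : Q, y * x k = z * x k → y = z := by
    intro k y z h
    have := canc k (y - z) (by linear_combination h)
    linear_combination this
  have rec1 : ∀ k : ℤ, x 0 * x 0 * x (k + 1) = x 1 * x 1 * x (k - 1) := by
    intro k
    by_cases hk : k = 0
    · subst hk; simp only [zero_add, zero_sub]; linear_combination (- x 1) * e3
    · have := even 1 k hk
      rw [add_comm 1 k] at this
      linear_combination x 1 * this - x (k+1) * e3
  have Z : ∀ a : ℤ, x a * x 1 = x 0 * x (a + 1) := by
    intro a
    induction a using Int.induction_on with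
    | zero => simp
    | succ n ih =>
      apply c0 0
      have := rec1 (n + 1)
      rw [add_sub_cancel_right] at this
      linear_combination (-x 1) * ih - this
    | pred n ih =>
      apply c0 1
      have := rec1 (-n)
      rw [sub_add_cancel]
      linear_combination (-x 0) * ih - this
  induction b using Int.induction_on with
  | zero => rw [add_zero]; ring
  | succ n ih =>
    apply c0 0
    have h1 := Z n
    have h2 := Z (a + n)
    rw [← add_assoc]
    linear_combination x 1 * ih - x a * h1 + x 0 * h2
  | pred n ih =>
    apply c0 1
    have h1 := Z (-n - 1)
    have h2 := Z (a + (-n - 1))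
    rw [sub_add_cancel] at h1
    rw [show a + (-(n:ℤ) - 1) + 1 = a + -n by ring] at h2
    linear_combination x 0 * ih + x a * h1 - x 0 * h2

theorem exists_phi {V : Type} [AddCommGroup V] [Module ℂ V] (h : ℤ → Module.End ℂ V)
    (hh : ∀ m n, h m * h n = h n * h m) :
    ∃ φ : MvPolynomial ℤ ℂ →ₐ[ℂ] Module.End ℂ V, ∀ m, φ (MvPolynomial.X m) = h m := by
  have hcomm : ∀ a ∈ Set.range h, ∀ b ∈ Set.range h, a * b = b * a := by
    rintro _ ⟨m, rfl⟩ _ ⟨n, rfl⟩; exact hh m n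
  letI : CommRing (Algebra.adjoin ℂ (Set.range h)) := Algebra.adjoinCommRingOfComm ℂ hcomm
  refine ⟨(Algebra.adjoin ℂ (Set.range h)).val.comp
    (MvPolynomial.aeval (fun m => (⟨h m, Algebra.subset_adjoin ⟨m, rfl⟩⟩ :
      Algebra.adjoin ℂ (Set.range h)))), ?_⟩
  intro m
  simp

/-- Bounded graded module for the centerless Heisenberg-Virasoro algebra with `h 0 = s ≠ 0`. -/
structure HV (V : Type) [AddCommGroup V] [Module ℂ V] where
  h : ℤ → Module.End ℂ V
  d : ℤ → Module.End ℂ V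
  W : ℤ → Submodule ℂ V
  s : ℂ
  P : ℕ
  hs : s ≠ 0
  hh : ∀ m n v, h m (h n v) = h n (h m v)
  dh : ∀ m n v, d m (h n v) = h n (d m v) + (n : ℂ) • h (m + n) v
  hW : ∀ m j, ∀ v ∈ W j, h m v ∈ W (j + m)
  dW : ∀ m j, ∀ v ∈ W j, d m v ∈ W (j + m)
  h0 : ∀ j, ∀ v ∈ W j, h 0 v = s • v
  fin : ∀ j, FiniteDimensional ℂ (W j)
  rk : ∀ j, Module.finrank ℂ (W j) ≤ P

namespace HV

variable {V : Type} [AddCommGroup V] [Module ℂ V] (R : HV V)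

open MvPolynomial in
theorem nilp (a b : ℤ) : ∃ n : ℕ, ∀ j, ∀ w ∈ R.W j,
    ((R.h a * R.h b - R.s • R.h (a + b)) ^ n) w = 0 := by
  obtain ⟨φ, hφ⟩ := exists_phi R.h (fun m n => LinearMap.ext (fun v => R.hh m n v))
  let D : ℤ → Derivation ℂ (MvPolynomial ℤ ℂ) (MvPolynomial ℤ ℂ) := fun k =>
    MvPolynomial.mkDerivation ℂ (fun m : ℤ => C (m : ℂ) * X (m + k))
  have hDX : ∀ k m, D k (X m) = C (m : ℂ) * X (m + k) := fun k m =>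
    MvPolynomial.mkDerivation_X _ _ _
  have hD : ∀ k f v, R.d k (φ f v) = φ f (R.d k v) + φ (D k f) v := by
    intro k f
    induction f using MvPolynomial.induction_on with
    | C a =>
      intro v
      have : (C a : MvPolynomial ℤ ℂ) = algebraMap ℂ _ a := rfl
      rw [this, Derivation.map_algebraMap, AlgHom.commutes]
      simp [Algebra.algebraMap_eq_smul_one]
    | add p q hp hq => intro v; simp only [map_add, LinearMap.add_apply, hp, hq]; abel
    | mul_X p m hp =>
      intro v
      rw [Derivation.leibniz, hDX]
      simp only [map_mul, Module.End.mul_apply, hφ, hp, R.dh, map_add, LinearMap.add_apply,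
        smul_eq_mul, map_smul]
      have : (C (m:ℂ) : MvPolynomial ℤ ℂ) = algebraMap ℂ _ (m:ℂ) := rfl
      rw [this, AlgHom.commutes]
      simp only [Algebra.algebraMap_eq_smul_one, LinearMap.smul_apply, Module.End.one_apply,
        map_smul]
      have e : R.h m (φ (D k p) v) = φ (D k p) (R.h m v) := by
        rw [← hφ, ← Module.End.mul_apply, ← Module.End.mul_apply, ← map_mul, ← map_mul, mul_comm]
      rw [e, add_comm k m]; abel
  let I : Ideal (MvPolynomial ℤ ℂ) :=
    { carrier := {f | ∀ j, ∀ w ∈ R.W j, φ f w = 0}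
      add_mem' := by
        intro f g hf hg j w hw
        rw [map_add, LinearMap.add_apply, hf j w hw, hg j w hw, add_zero]
      zero_mem' := by intro j w hw; simp
      smul_mem' := by
        intro c f hf j w hw
        rw [smul_eq_mul, map_mul, Module.End.mul_apply, hf j w hw, map_zero] }
  have hcommφ : ∀ f g v, φ f (φ g v) = φ g (φ f v) := by
    intro f g v
    rw [← Module.End.mul_apply, ← map_mul, mul_comm, map_mul, Module.End.mul_apply]
  have memI : ∀ f, f ∈ I ↔ ∀ j, ∀ w ∈ R.W j, φ f w = 0 := fun f => Iff.rfl
  have hDI : ∀ k, ∀ f ∈ I, D k f ∈ I := by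
    intro k f hf j w hw
    have := hD k f w
    rw [hf j w hw, hf _ _ (R.dW k j w hw), map_zero, zero_add] at this
    exact this.symm
  have hDJ : ∀ k, ∀ f ∈ I.radical, D k f ∈ I.radical := fun k => rad_stable I (D k) (hDI k)
  have hX0 : (X 0 - C R.s : MvPolynomial ℤ ℂ) ∈ I.radical := by
    apply Ideal.le_radical
    intro j w hw
    have : (C R.s : MvPolynomial ℤ ℂ) = algebraMap ℂ _ R.s := rfl
    rw [map_sub, hφ, this, AlgHom.commutes]
    simp [Algebra.algebraMap_eq_smul_one, R.h0 j w hw]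
  have hrad : ∀ f, f * f ∈ I.radical → f ∈ I.radical := by
    intro f hf
    rw [← pow_two] at hf
    exact (I.radical_isRadical) ⟨2, hf⟩
  have hCs : (C (R.s⁻¹) * C R.s : MvPolynomial ℤ ℂ) = 1 := by
    rw [← map_mul, inv_mul_cancel₀ R.hs, map_one]
  -- cancellation
  have canc : ∀ k : ℤ, ∀ y, y * X k ∈ I.radical → y ∈ I.radical := by
    intro k y hy
    by_cases hk : k = 0
    · subst hk
      have h1 := I.radical.mul_mem_left (C (R.s⁻¹)) (I.radical.sub_mem hy
        (I.radical.mul_mem_left y hX0))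
      convert h1 using 1
      linear_combination (-y) * hCs
    · apply hrad
      have h1 := hDJ (-k) _ hy
      rw [Derivation.leibniz, hDX, add_neg_cancel] at h1
      have h2 := I.radical.mul_mem_left y h1
      have h3 := I.radical.mul_mem_left (D (-k) y) hy
      have h4 := I.radical.mul_mem_left (C (k : ℂ) * y * y) hX0
      have h5 := I.radical.mul_mem_left (C ((k : ℂ)⁻¹) * C (R.s⁻¹))
        (I.radical.sub_mem (I.radical.sub_mem h2 h3) h4)
      have hCk : (C ((k : ℂ)⁻¹) * C (k : ℂ) : MvPolynomial ℤ ℂ) = 1 := by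
        rw [← map_mul, inv_mul_cancel₀ (by exact_mod_cast hk), map_one]
      convert h5 using 1
      simp only [smul_eq_mul]
      linear_combination (-y * y) * hCs - (y * y * C (R.s⁻¹) * C R.s) * hCk
  have even : ∀ m k : ℤ, k ≠ 0 → (X (m + k) * X (-m) - X m * X (k - m) :
      MvPolynomial ℤ ℂ) ∈ I.radical := by
    intro m k hk
    by_cases hm : m = 0
    · subst hm
      simp only [zero_add, neg_zero, sub_zero]
      rw [mul_comm, sub_self]; exact zero_mem _
    apply canc (-k)
    have hmain : X (-k) * D k (X m * X (-m)) ∈ I.radical := by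
      refine ⟨R.P, ?_⟩
      intro j w hw
      have hB : ∀ x ∈ R.W j, φ (X m * X (-m)) x ∈ R.W j := by
        intro x hx
        rw [map_mul, hφ, hφ]
        have := R.hW m _ _ (R.hW (-m) j x hx)
        rwa [neg_add_cancel_right] at this
      have hDD : ∀ x ∈ R.W j, (φ (X (-k)) * R.d k) x ∈ R.W j := by
        intro x hx
        rw [hφ]
        have := R.hW (-k) _ _ (R.dW k j x hx)
        rwa [add_neg_cancel_right] at this
      have hcm : ∀ x, φ (X (-k) * D k (X m * X (-m))) x =
          (φ (X (-k)) * R.d k) (φ (X m * X (-m)) x) -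
          φ (X m * X (-m)) ((φ (X (-k)) * R.d k) x) := by
        intro x
        rw [Module.End.mul_apply, Module.End.mul_apply, hD, map_add]
        rw [hcommφ (X m * X (-m)) (X (-k)), add_sub_cancel_left, map_mul, Module.End.mul_apply]
      have hC : ∀ x ∈ R.W j, φ (X (-k) * D k (X m * X (-m))) x ∈ R.W j := by
        intro x hx
        rw [hcm]
        exact (R.W j).sub_mem (hDD _ (hB x hx)) (hB _ (hDD x hx))
      haveI := R.fin j
      have hn : IsNilpotent ((φ (X (-k) * D k (X m * X (-m)))).restrict hC) := by
        refine ks_nilp (LinearMap.restrict _ hDD) (LinearMap.restrict _ hB) _ ?_ ?_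
        · ext x
          simp only [LinearMap.sub_apply, Module.End.mul_apply, Submodule.coe_sub,
            LinearMap.coe_restrict_apply]
          rw [hcm]; rfl
        · ext x
          simp only [Module.End.mul_apply, LinearMap.coe_restrict_apply]
          rw [← Module.End.mul_apply, ← Module.End.mul_apply, ← map_mul, ← map_mul, mul_comm]
      have hz : ((φ (X (-k) * D k (X m * X (-m)))).restrict hC) ^ R.P = 0 := by
        have h2 := LinearMap.aeval_self_charpoly ((φ (X (-k) * D k (X m * X (-m)))).restrict hC)
        rw [hn.charpoly_eq_X_pow_finrank] at h2
        simp only [map_pow, Polynomial.aeval_X] at h2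
        exact pow_eq_zero_of_le (R.rk j) h2
      have h3 := congrArg (fun f => ((f ⟨w, hw⟩ : R.W j) : V)) hz
      rw [Module.End.pow_restrict] at h3
      rw [map_pow]
      exact h3
    have hCm : (C ((m : ℂ)⁻¹) * C (m : ℂ) : MvPolynomial ℤ ℂ) = 1 := by
      rw [← map_mul, inv_mul_cancel₀ (by exact_mod_cast hm), map_one]
    have h1 := I.radical.mul_mem_left (C ((m : ℂ)⁻¹)) hmain
    rw [Derivation.leibniz, hDX, hDX] at h1
    convert h1 using 1
    simp only [smul_eq_mul]
    rw [show -m + k = k - m by ring]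
    push_cast
    rw [map_neg]
    linear_combination (-(X (m+k) * X (-m) - X m * X (k-m)) * X (-k)) * hCm
  have spec : (X 3 * X (-1) - X 2 * X 0 : MvPolynomial ℤ ℂ) ∈ I.radical := by
    have h1 := hDJ 1 _ (even 1 1 one_ne_zero)
    rw [map_sub, Derivation.leibniz, Derivation.leibniz, hDX, hDX, hDX, hDX] at h1
    norm_num at h1
    have h2 := I.radical.mul_mem_left (C ((2:ℂ)⁻¹)) h1
    have hC2 : (C ((2 : ℂ)⁻¹) * C (2 : ℂ) : MvPolynomial ℤ ℂ) = 1 := by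
      rw [← map_mul, inv_mul_cancel₀ two_ne_zero, map_one]
    have hC2' : (C (2 : ℂ) : MvPolynomial ℤ ℂ) = 2 := rfl
    convert h2 using 1
    linear_combination (-(X 3 * X (-1) - X 2 * X 0)) * hC2 - (C ((2:ℂ)⁻¹) * X 2 * X 0) * hC2'
  have fin := ring_part (fun m => Ideal.Quotient.mk I.radical (X m))
    (by
      intro k y
      obtain ⟨y, rfl⟩ := Ideal.Quotient.mk_surjective y
      rw [← map_mul, Ideal.Quotient.eq_zero_iff_mem, Ideal.Quotient.eq_zero_iff_mem]
      exact canc k y)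
    (by
      intro m k hk
      rw [← map_mul, ← map_mul, Ideal.Quotient.eq]
      exact even m k hk)
    (by rw [← map_mul, ← map_mul, Ideal.Quotient.eq]; exact spec) a b
  beta_reduce at fin
  rw [← map_mul, ← map_mul, Ideal.Quotient.eq] at fin
  have fin2 := I.radical.add_mem fin (I.radical.mul_mem_left (X (a + b)) hX0)
  obtain ⟨n, hn⟩ := fin2
  refine ⟨n, fun j w hw => ?_⟩
  have := hn j w hw
  rw [map_pow] at this
  convert this using 3
  have e : (X a * X b - X 0 * X (a + b) + X (a + b) * (X 0 - C R.s) : MvPolynomial ℤ ℂ)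
    = X a * X b - algebraMap ℂ _ R.s * X (a + b) := by
      rw [MvPolynomial.algebraMap_eq]; ring
  rw [e, map_sub, map_mul, map_mul, AlgHom.commutes, hφ, hφ, hφ, Algebra.algebraMap_eq_smul_one,
    smul_mul_assoc, one_mul]

end HV

theorem exists_max_eig {E : Type*} [AddCommGroup E] [Module ℂ E] [FiniteDimensional ℂ E]
    [Nontrivial E] (T : Module.End ℂ E) :
    ∃ (μ : ℂ) (v : E), v ≠ 0 ∧ T v = μ • v ∧
      ∀ (ρ : ℂ) (w : E), T w = ρ • w → μ.re < ρ.re → w = 0 := by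
  have hfin : {μ | T.HasEigenvalue μ}.Finite := Module.End.finite_hasEigenvalue T
  have hne : {μ | T.HasEigenvalue μ}.Nonempty := Module.End.exists_eigenvalue T
  obtain ⟨μ, hμ, hmax⟩ := Set.exists_max_image _ Complex.re hfin hne
  obtain ⟨v, hv⟩ := Module.End.HasEigenvalue.exists_hasEigenvector hμ
  refine ⟨μ, v, hv.2, hv.apply_eq_smul, fun ρ w hw hlt => ?_⟩
  by_contra hne
  have : T.HasEigenvalue ρ :=
    Module.End.hasEigenvalue_of_hasEigenvector
      ⟨Module.End.mem_eigenspace_iff.2 hw, hne⟩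
  exact absurd (hmax ρ this) (not_le.2 hlt)

theorem quasi_witt {E : Type*} [AddCommGroup E] [Module ℂ E] [FiniteDimensional ℂ E]
    [Nontrivial E] (D : ℤ → Module.End ℂ E)
    (hD : ∀ k l v, D k (D l v) - D l (D k v) =
      ((l : ℂ) - k) • D (k + l) v - (l : ℂ) • D l v + (k : ℂ) • D k v)
    (h0 : ∀ v, D 0 v = 0) :
    ∃ (μ : ℂ) (v : E), v ≠ 0 ∧ ∀ k : ℤ, D k v = (k * μ : ℂ) • v := by
  obtain ⟨μ, v, hv0, hv, hmax⟩ := exists_max_eig (D 1)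
  have hdown : ∀ n : ℕ, D (-(n : ℤ)) v = ((-(n : ℤ) : ℤ) * μ : ℂ) • v := by
    intro n
    induction n with
    | zero => simp [h0]
    | succ n ih =>
      have h1 := hD 1 (-((n : ℤ) + 1)) v
      rw [show (1 : ℤ) + -((n : ℤ) + 1) = -(n : ℤ) by ring, ih, hv] at h1
      push_cast at h1 ⊢
      have h2 := hmax (μ + n + 1) (D (-((n : ℤ) + 1)) v - ((-((n : ℂ) + 1)) * μ) • v) ?_ ?_
      · exact sub_eq_zero.1 h2
      · rw [map_sub, map_smul, hv]
        rw [map_smul, sub_eq_iff_eq_add] at h1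
        rw [h1]
        module
      · simp only [Complex.add_re, Complex.natCast_re, Complex.one_re]
        have : (0 : ℝ) ≤ n := Nat.cast_nonneg n
        linarith
  have hm1 : D (-1) v = (-μ) • v := by
    have := hdown 1
    simpa using this
  obtain ⟨ρ, w, hw0, hw, hmax'⟩ := exists_max_eig (-(D (-1)))
  have hw1 : D (-1) w = (-ρ) • w := by
    rw [neg_smul, ← hw, LinearMap.neg_apply, neg_neg]
  have hz : D 1 w + D (-1) w = 0 := by
    refine hmax' (ρ + 1) _ ?_ (by simp)
    have h1 := hD 1 (-1) w
    rw [show (1 : ℤ) + -1 = 0 by ring, h0, hw1] at h1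
    rw [map_smul, sub_eq_iff_eq_add] at h1
    rw [LinearMap.neg_apply, map_add, hw1, map_smul, hw1]
    have h2 : D (-1) (D 1 w) = (-ρ) • D 1 w - (((-1 : ℤ) : ℂ) - ((1 : ℤ) : ℂ)) • (0 : E)
        + ((-1 : ℤ) : ℂ) • (-ρ) • w - ((1 : ℤ) : ℂ) • D 1 w := by
      rw [h1]; module
    rw [h2]
    push_cast
    module
  have hle : ρ.re ≤ μ.re := by
    by_contra hlt
    refine hw0 (hmax ρ w ?_ (not_le.1 hlt))
    rw [hw1] at hz
    rw [eq_neg_of_add_eq_zero_left hz]; module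
  have hup : ∀ n : ℕ, D (n : ℤ) v = ((n : ℤ) * μ : ℂ) • v := by
    intro n
    induction n with
    | zero => simp [h0]
    | succ n ih =>
      have h1 := hD (-1) ((n : ℤ) + 1) v
      rw [show -1 + ((n : ℤ) + 1) = (n : ℤ) by ring, ih, hm1] at h1
      push_cast at h1 ⊢
      have h2 := hmax' (μ + n + 1) (D ((n : ℤ) + 1) v - (((n : ℂ) + 1) * μ) • v) ?_ ?_
      · exact sub_eq_zero.1 h2
      · rw [LinearMap.neg_apply, map_sub, map_smul, hm1]
        rw [map_smul, sub_eq_iff_eq_add] at h1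
        rw [h1]
        module
      · simp only [Complex.add_re, Complex.natCast_re, Complex.one_re]
        have : (0 : ℝ) ≤ n := Nat.cast_nonneg n
        linarith
  refine ⟨μ, v, hv0, fun k => ?_⟩
  obtain ⟨n, rfl | rfl⟩ := k.eq_nat_or_neg
  · exact hup n
  · exact hdown n

theorem joint_kernel {V ι : Type*} [AddCommGroup V] [Module ℂ V] (T : ι → Module.End ℂ V)
    (hc : ∀ i j v, T i (T j v) = T j (T i v)) :
    ∀ (n : ℕ) (F : Submodule ℂ V), FiniteDimensional ℂ F → Module.finrank ℂ F ≤ n → F ≠ ⊥ →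
      (∀ i, ∀ v ∈ F, T i v ∈ F) → (∀ i, ∃ k : ℕ, ∀ v ∈ F, (T i ^ k) v = 0) →
      ∃ v ∈ F, v ≠ 0 ∧ ∀ i, T i v = 0 := by
  intro n
  induction n with
  | zero =>
    intro F hF hn hne
    exact absurd (Submodule.finrank_eq_zero.1 (Nat.le_zero.1 hn)) hne
  | succ n ih =>
    intro F hF hn hne hT hnil
    by_cases hall : ∀ i, ∀ v ∈ F, T i v = 0
    · obtain ⟨v, hv, hv0⟩ := Submodule.exists_mem_ne_zero_of_ne_bot hne
      exact ⟨v, hv, hv0, fun i => hall i v hv⟩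
    push Not at hall
    obtain ⟨i, f, hf, hTf⟩ := hall
    have hlt : F ⊓ LinearMap.ker (T i) < F := by
      refine lt_of_le_of_ne inf_le_left (fun he => hTf ?_)
      rw [← he] at hf
      exact hf.2
    have hne' : F ⊓ LinearMap.ker (T i) ≠ ⊥ := by
      intro hbot
      have hinj : ∀ v ∈ F, T i v = 0 → v = 0 := by
        intro v hv h0
        have : v ∈ F ⊓ LinearMap.ker (T i) := ⟨hv, h0⟩
        rw [hbot] at this
        exact this
      obtain ⟨k, hk⟩ := hnil i
      have : ∀ k : ℕ, ∀ v ∈ F, (T i ^ k) v = 0 → v = 0 := by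
        intro k
        induction k with
        | zero => intro v _ h; simpa using h
        | succ k ihk =>
          intro v hv h
          rw [pow_succ, Module.End.mul_apply] at h
          exact hinj v hv (ihk _ (hT i v hv) h)
      apply hTf
      rw [this k f hf (hk f hf), map_zero]
    obtain ⟨v, hv, hv0, hv1⟩ := ih (F ⊓ LinearMap.ker (T i))
      (Submodule.finiteDimensional_of_le inf_le_left)
      (by have := Submodule.finrank_lt_finrank_of_lt hlt; omega) hne'
      (by
        rintro j v ⟨hv, hk⟩
        refine ⟨hT j v hv, ?_⟩
        have hk' : T i v = 0 := hk
        show T i (T j v) = 0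
        rw [hc, hk', map_zero])
      (by
        intro j
        obtain ⟨k, hk⟩ := hnil j
        exact ⟨k, fun v hv => hk v hv.1⟩)
    exact ⟨v, hv.1, hv0, hv1⟩

theorem end_pow_eig {V : Type*} [AddCommGroup V] [Module ℂ V] (T : Module.End ℂ V) (c : ℂ) (w : V)
    (h : T w = c • w) (n : ℕ) : (T ^ n) w = c ^ n • w := by
  induction n with
  | zero => simp
  | succ n ih => rw [pow_succ, Module.End.mul_apply, h, map_smul, ih, smul_smul, pow_succ, mul_comm]

namespace HV

variable {V : Type} [AddCommGroup V] [Module ℂ V] (R : HV V)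

theorem inj (k j : ℤ) (w : V) (hw : w ∈ R.W j) (h : R.h k w = 0) : w = 0 := by
  obtain ⟨n, hn⟩ := R.nilp (-k) k
  have h1 := hn j w hw
  rw [end_pow_eig _ (-(R.s * R.s)) w ?_ n] at h1
  · refine (smul_eq_zero.1 h1).resolve_left (pow_ne_zero _ (neg_ne_zero.2 ?_))
    exact mul_ne_zero R.hs R.hs
  · rw [LinearMap.sub_apply, Module.End.mul_apply, h, map_zero, neg_add_cancel,
      LinearMap.smul_apply, R.h0 j w hw]
    module

theorem surj (j : ℤ) (w : V) (hw : w ∈ R.W j) : ∃ w' ∈ R.W (j - 1), R.h 1 w' = w := by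
  have := R.fin j
  have hmap : ∀ x ∈ R.W j, (R.h 1 * R.h (-1)) x ∈ R.W j := by
    intro x hx
    have := R.hW 1 _ _ (R.hW (-1) j x hx)
    rwa [neg_add_cancel_right] at this
  have hinj : Function.Injective ((R.h 1 * R.h (-1)).restrict hmap) := by
    rw [← LinearMap.ker_eq_bot, LinearMap.ker_eq_bot']
    intro x hx
    have h1 := congrArg (Subtype.val) hx
    rw [LinearMap.coe_restrict_apply, Module.End.mul_apply] at h1
    have h2 := R.inj 1 _ _ (R.hW (-1) j x x.2) h1
    exact Subtype.ext (R.inj (-1) j _ x.2 h2)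
  obtain ⟨y, hy⟩ := (LinearMap.injective_iff_surjective.1 hinj) ⟨w, hw⟩
  refine ⟨R.h (-1) y, R.hW (-1) j y y.2, ?_⟩
  have h1 := congrArg (Subtype.val) hy
  rw [LinearMap.coe_restrict_apply, Module.End.mul_apply] at h1
  exact h1

/-- Vectors on which `h` acts group-like. -/
def N (j : ℤ) : Submodule ℂ V where
  carrier := {w | w ∈ R.W j ∧ ∀ a b, R.h a (R.h b w) = R.s • R.h (a + b) w}
  add_mem' := by
    rintro x y ⟨hx, hx'⟩ ⟨hy, hy'⟩
    refine ⟨add_mem hx hy, fun a b => ?_⟩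
    simp only [map_add, hx', hy', smul_add]
  zero_mem' := ⟨zero_mem _, fun a b => by simp⟩
  smul_mem' := by
    rintro c x ⟨hx, hx'⟩
    refine ⟨Submodule.smul_mem _ c hx, fun a b => ?_⟩
    simp only [map_smul, hx']
    module

theorem N_h (m j : ℤ) (w : V) (hw : w ∈ R.N j) : R.h m w ∈ R.N (j + m) := by
  refine ⟨R.hW m j w hw.1, fun a b => ?_⟩
  rw [R.hh b m, R.hh a m, hw.2, map_smul, R.hh m]

theorem N_d (m j : ℤ) (w : V) (hw : w ∈ R.N j) : R.d m w ∈ R.N (j + m) := by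
  refine ⟨R.dW m j w hw.1, fun a b => ?_⟩
  have h1 : R.d m (R.h a (R.h b w)) = R.s • R.d m (R.h (a + b) w) := by rw [hw.2, map_smul]
  rw [R.dh, R.dh, R.dh, map_add, map_smul, hw.2, hw.2, ← add_assoc, add_comm a m,
    add_assoc m a b] at h1
  push_cast at h1
  linear_combination (norm := module) h1

theorem N_ne (h : R.W 0 ≠ ⊥) : R.N 0 ≠ ⊥ := by
  have := R.fin 0
  have hcm : ∀ i j, Commute (R.h i) (R.h j) := fun i j => LinearMap.ext (fun v => R.hh i j v)
  have hcT : ∀ i a b, Commute (R.h i) (R.h a * R.h b - R.s • R.h (a + b)) := fun i a b =>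
    ((hcm i a).mul_right (hcm i b)).sub_right ((hcm i _).smul_right _)
  have hcTT : ∀ c d a b, Commute (R.h c * R.h d - R.s • R.h (c + d))
      (R.h a * R.h b - R.s • R.h (a + b)) := fun c d a b =>
    ((hcT c a b).mul_left (hcT d a b)).sub_left ((hcT _ a b).smul_left _)
  let T : ℤ × ℤ → Module.End ℂ V := fun p =>
    R.h (-(p.1 + p.2)) * (R.h p.1 * R.h p.2 - R.s • R.h (p.1 + p.2))
  have hWT : ∀ a b, ∀ v ∈ R.W 0, (R.h a * R.h b - R.s • R.h (a + b)) v ∈ R.W (a + b) := by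
    intro a b v hv
    have h1 := R.hW a _ _ (R.hW b 0 v hv)
    have h2 := R.hW (a + b) 0 v hv
    rw [show (0 : ℤ) + b + a = a + b by ring] at h1
    rw [zero_add] at h2
    exact sub_mem h1 (Submodule.smul_mem _ _ h2)
  obtain ⟨v, hv, hv0, hv1⟩ := joint_kernel T
    (by
      intro p q v
      have : Commute (T p) (T q) :=
        (((hcm _ _).mul_right (hcT _ _ _))).mul_left
          (((hcT _ _ _).symm).mul_right (hcTT _ _ _ _))
      exact LinearMap.congr_fun this.eq v)
    _ (R.W 0) (R.fin 0) le_rfl h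
    (by
      rintro ⟨a, b⟩ v hv
      have := R.hW (-(a + b)) _ _ (hWT a b v hv)
      rwa [add_neg_cancel] at this)
    (by
      rintro ⟨a, b⟩
      obtain ⟨n, hn⟩ := R.nilp a b
      refine ⟨n, fun v hv => ?_⟩
      have : T (a, b) ^ n = R.h (-(a + b)) ^ n * (R.h a * R.h b - R.s • R.h (a + b)) ^ n :=
        (hcT _ _ _).mul_pow n
      rw [this, Module.End.mul_apply, hn 0 v hv, map_zero])
  refine (Submodule.ne_bot_iff _).2 ⟨v, ⟨hv, fun a b => ?_⟩, hv0⟩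
  have h1 := R.inj _ _ _ (hWT a b v hv) (hv1 (a, b))
  exact sub_eq_zero.1 h1

theorem start (lam : ℂ)
    (dd : ∀ k l v, R.d k (R.d l v) = R.d l (R.d k v) + ((l : ℂ) - k) • R.d (k + l) v)
    (d0 : ∀ v ∈ R.W 0, R.d 0 v = lam • v) (hne : R.W 0 ≠ ⊥) :
    ∃ (β : ℂ) (u : ℤ → V), (∀ j, u j ∈ R.W j) ∧ u 0 ≠ 0 ∧
      (∀ m j, R.h m (u j) = R.s • u (j + m)) ∧
      (∀ m j : ℤ, R.d m (u j) = (lam + j + β * m) • u (j + m)) := by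
  have hs := R.hs
  have hmem : ∀ k, ∀ v ∈ R.N 0, (R.s⁻¹ • (R.h (-k) * R.d k) - lam • (1 : Module.End ℂ V)) v
      ∈ R.N 0 := by
    intro k v hv
    have h1 := R.N_h (-k) _ _ (R.N_d k 0 v hv)
    rw [add_neg_cancel_right] at h1
    exact sub_mem (Submodule.smul_mem _ _ h1) (Submodule.smul_mem _ _ hv)
  have : FiniteDimensional ℂ (R.N 0) := by
    have := R.fin 0
    exact Submodule.finiteDimensional_of_le (fun x hx => hx.1 : R.N 0 ≤ R.W 0)
  have : Nontrivial (R.N 0) := Submodule.nontrivial_iff_ne_bot.2 (R.N_ne hne)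
  obtain ⟨μ, v, hv0, hv⟩ := quasi_witt (fun k => LinearMap.restrict _ (hmem k))
    (by
      intro k l v
      apply Subtype.ext
      obtain ⟨v, hv⟩ := v
      simp only [LinearMap.coe_restrict_apply, Submodule.coe_sub, Submodule.coe_add,
        Submodule.coe_smul, LinearMap.sub_apply, LinearMap.smul_apply, Module.End.mul_apply,
        Module.End.one_apply, map_sub, map_smul, smul_sub]
      have hkey : ∀ k l : ℤ, R.h (-k) (R.d k (R.h (-l) (R.d l v))) =
          R.s • R.h (-(k + l)) (R.d k (R.d l v)) - ((l : ℂ) * R.s) • R.h (-l) (R.d l v) := by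
        intro k l
        have h1 := (R.N_d k _ _ (R.N_d l 0 v hv)).2 (-k) (-l)
        have h2 := (R.N_d l 0 v hv).2 (-k) (k + -l)
        rw [R.dh, map_add, map_smul, h1, h2, neg_add_cancel_left, neg_add]
        push_cast
        module
      rw [hkey k l, hkey l k, dd k l v, map_add, map_smul, add_comm l k]
      match_scalars <;> field_simp <;> ring)
    (by
      intro v
      apply Subtype.ext
      obtain ⟨v, hv⟩ := v
      simp only [LinearMap.coe_restrict_apply, LinearMap.sub_apply, LinearMap.smul_apply,
        Module.End.mul_apply, Module.End.one_apply, neg_zero, d0 v hv.1, map_smul, R.h0 0 v hv.1]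
      rw [smul_comm lam R.s, inv_smul_smul₀ hs, sub_self]
      rfl)
  obtain ⟨v, hvN⟩ := v
  have hvd : ∀ k : ℤ, R.h (-k) (R.d k v) = (R.s * (lam + k * μ)) • v := by
    intro k
    have h1 := congrArg Subtype.val (hv k)
    simp only [LinearMap.coe_restrict_apply, Submodule.coe_smul, LinearMap.sub_apply,
      LinearMap.smul_apply, Module.End.mul_apply, Module.End.one_apply] at h1
    rw [sub_eq_iff_eq_add, inv_smul_eq_iff₀ hs] at h1
    rw [h1]; module
  have hdv : ∀ k : ℤ, R.d k v = (R.s⁻¹ * (lam + k * μ)) • R.h k v := by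
    intro k
    have h1 := congrArg (R.h k) (hvd k)
    have hN := R.N_d k 0 v hvN
    rw [hN.2, add_neg_cancel, R.h0 _ _ hN.1, map_smul, mul_smul] at h1
    have h2 := (smul_right_injective V hs) h1
    rw [mul_smul, ← h2, inv_smul_smul₀ hs]
  refine ⟨μ, fun j => R.s⁻¹ • R.h j v, fun j => ?_, ?_, fun m j => ?_, fun m j => ?_⟩
  · have := R.hW j 0 v hvN.1
    rw [zero_add] at this
    exact Submodule.smul_mem _ _ this
  · beta_reduce
    rw [R.h0 0 v hvN.1, inv_smul_smul₀ hs]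
    intro h
    exact hv0 (Subtype.ext h)
  · beta_reduce
    rw [map_smul, hvN.2, add_comm m j]
    module
  · beta_reduce
    rw [map_smul, R.dh, hdv, map_smul, hvN.2, add_comm m j]
    match_scalars
    field_simp
    ring

end HV

theorem rel_lemma {V : Type} [AddCommGroup V] [Module ℂ V] (h1 h2 : Module.End ℂ V)
    (hc : h1 * h2 = h2 * h1) (G : ℤ → Module.End ℂ V)
    (hG1 : ∀ m, G m * h1 - h1 * G m = G (m + 1)) (hG2 : ∀ m, G m * h2 - h2 * G m = G (m + 2))
    (s : ℂ) (W0 W1 : V → Prop) (N : ℕ)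
    (hW0 : ∀ w, W0 w → W0 ((h1 * h1 - s • h2) w)) (hGW : ∀ m w, W0 w → W1 (G m w))
    (hN0 : ∀ w, W0 w → ((h1 * h1 - s • h2) ^ N) w = 0)
    (hN1 : ∀ w, W1 w → ((h1 * h1 - (s - 1) • h2) ^ N) w = 0) (m : ℤ) (w : V) (hw : W0 w) :
    ∑ i ∈ Finset.range (4 * N + 1),
      ((s ^ i * (-1) ^ (4 * N - i)) * ((4 * N).choose i : ℂ)) •
        G (m + i) ((h1 ^ (4 * N - i)) w) = 0 := by
  have hcm : Commute h1 h2 := hc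
  let l : Module.End ℂ V → Module.End ℂ (Module.End ℂ V) := LinearMap.mulLeft ℂ
  let r : Module.End ℂ V → Module.End ℂ (Module.End ℂ V) := LinearMap.mulRight ℂ
  have lr : ∀ a b, Commute (l a) (r b) := fun a b => by
    refine LinearMap.ext (fun x => ?_)
    simp only [l, r, Module.End.mul_apply, LinearMap.mulLeft_apply, LinearMap.mulRight_apply, mul_assoc]
  have ll : ∀ a b, Commute a b → Commute (l a) (l b) := by
    intro a b hab
    refine LinearMap.ext (fun x => ?_)
    simp only [l, Module.End.mul_apply, LinearMap.mulLeft_apply, ← mul_assoc, hab.eq]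
  have rr : ∀ a b, Commute a b → Commute (r a) (r b) := by
    intro a b hab
    refine LinearMap.ext (fun x => ?_)
    simp only [r, Module.End.mul_apply, LinearMap.mulRight_apply, mul_assoc, hab.eq]
  have hx : ∀ i : ℕ, ((r h1 - l h1) ^ i) (G m) = G (m + i) := by
    intro i
    induction i with
    | zero => simp
    | succ i ih =>
      rw [pow_succ', Module.End.mul_apply, ih]
      simp only [l, r, LinearMap.sub_apply, LinearMap.mulLeft_apply, LinearMap.mulRight_apply]
      rw [hG1]; push_cast; rw [add_assoc]
  set y : Module.End ℂ (Module.End ℂ V) := (s - 1) • r h1 - s • l h1 with hy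
  have hy2 : y = s • (r h1 - l h1) + -(r h1) := by rw [hy]; module
  set ν := h1 * h1 - s • h2 with hν
  set ν' := h1 * h1 - (s - 1) • h2 with hν'
  set A : Module.End ℂ (Module.End ℂ V) := (-(s - 1)) • r ν with hA
  set B : Module.End ℂ (Module.End ℂ V) := s • l ν' with hB
  have c1 : Commute h1 ν := ((Commute.refl h1).mul_right (Commute.refl h1)).sub_right
    (hcm.smul_right _)
  have c1' : Commute h1 ν' := ((Commute.refl h1).mul_right (Commute.refl h1)).sub_right
    (hcm.smul_right _)
  have hAB : Commute A B := ((lr ν' ν).symm.smul_left _).smul_right _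
  have hyA : Commute y A :=
    ((((rr h1 ν c1).smul_left _).sub_left ((lr h1 ν).smul_left _))).smul_right _
  have hyB : Commute y B :=
    ((((lr ν' h1).symm.smul_left _).sub_left ((ll h1 ν' c1').smul_left _))).smul_right _
  have hsq : (y ^ 2) (G m) = (A + B) (G m) := by
    have e1 := hG2 m
    have e2 := hG1 m
    have e3 := hG1 (m + 1)
    rw [← e2, show m + 1 + 1 = m + 2 by ring, ← e1] at e3
    rw [pow_two, hA, hB, hy, hν, hν']
    simp only [l, r, Module.End.mul_apply, LinearMap.sub_apply, LinearMap.add_apply,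
      LinearMap.smul_apply, LinearMap.mulLeft_apply, LinearMap.mulRight_apply, mul_sub, sub_mul,
      mul_smul_comm, smul_mul_assoc, smul_sub, mul_assoc] at e3 ⊢
    linear_combination (norm := module) (s * (s - 1)) • e3
  have hpow : ∀ k : ℕ, (y ^ (2 * k)) (G m) = ((A + B) ^ k) (G m) := by
    intro k
    induction k with
    | zero => simp
    | succ k ih =>
      have : Commute (y ^ 2) ((A + B) ^ k) := ((hyA.add_right hyB).pow_pow 2 k)
      rw [show 2 * (k + 1) = 2 + 2 * k by ring, pow_add, Module.End.mul_apply, ih,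
        ← Module.End.mul_apply, this.eq, Module.End.mul_apply, hsq, pow_succ,
        Module.End.mul_apply]
  have hWpow : ∀ i : ℕ, W0 ((ν ^ i) w) := by
    intro i
    induction i with
    | zero => simpa using hw
    | succ i ih => rw [pow_succ', Module.End.mul_apply]; exact hW0 _ ih
  have hzero : ((y ^ (4 * N)) (G m)) w = 0 := by
    rw [show 4 * N = 2 * (2 * N) by ring, hpow, hAB.add_pow]
    simp only [LinearMap.sum_apply]
    refine Finset.sum_eq_zero (fun i _ => ?_)
    have e : (A ^ i * B ^ (2 * N - i)) =
        ((-(s - 1)) ^ i * s ^ (2 * N - i)) • ((r ν) ^ i * (l ν') ^ (2 * N - i)) := by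
      rw [hA, hB, smul_pow, smul_pow, smul_mul_smul_comm]
    rw [e, Module.End.mul_apply]
    have e2 : ∀ X : Module.End ℂ V, ((r ν) ^ i * (l ν') ^ (2 * N - i)) X =
        ν' ^ (2 * N - i) * X * ν ^ i := by
      intro X
      rw [Module.End.mul_apply]
      simp only [l, r, LinearMap.pow_mulLeft, LinearMap.pow_mulRight, LinearMap.mulLeft_apply,
        LinearMap.mulRight_apply]
    rw [LinearMap.smul_apply, e2, Module.End.natCast_apply]
    rw [LinearMap.smul_apply, mul_smul_comm, smul_mul_assoc, LinearMap.smul_apply,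
      Module.End.mul_apply, Module.End.mul_apply]
    by_cases hi : N ≤ i
    · have : (ν ^ i) w = 0 := by
        rw [show i = (i - N) + N by omega, pow_add, Module.End.mul_apply, hN0 w hw, map_zero]
      rw [this]; simp
    · have : (ν' ^ (2 * N - i)) (G m ((ν ^ i) w)) = 0 := by
        rw [show 2 * N - i = (N - i) + N by omega, pow_add, Module.End.mul_apply,
          hN1 _ (hGW m _ (hWpow i)), map_zero]
      rw [this]; simp
  have hxr : Commute (s • (r h1 - l h1)) (-(r h1)) :=
    (((Commute.refl (r h1)).sub_left (lr h1 h1)).smul_left s).neg_right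
  rw [hy2, hxr.add_pow] at hzero
  simp only [LinearMap.sum_apply] at hzero
  rw [← hzero]
  refine Finset.sum_congr rfl (fun i _ => ?_)
  have e : ((s • (r h1 - l h1)) ^ i * (-(r h1)) ^ (4 * N - i)) =
      (s ^ i * (-1) ^ (4 * N - i)) • ((r h1) ^ (4 * N - i) * (r h1 - l h1) ^ i) := by
    have hc' : Commute ((r h1 - l h1) ^ i) ((r h1) ^ (4 * N - i)) :=
      ((Commute.refl (r h1)).sub_left (lr h1 h1)).pow_pow _ _
    rw [smul_pow, show -(r h1) = (-1 : ℂ) • r h1 by module, smul_pow, smul_mul_smul_comm, hc'.eq]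
  rw [e, Module.End.mul_apply, Module.End.natCast_apply, map_nsmul, LinearMap.smul_apply,
    LinearMap.smul_apply, Module.End.mul_apply, hx]
  simp only [r, LinearMap.pow_mulRight, LinearMap.mulRight_apply, LinearMap.smul_apply,
    Module.End.mul_apply]
  rw [← Nat.cast_smul_eq_nsmul ℂ, smul_smul, mul_comm]

namespace RamondRep

variable {V : Type} [AddCommGroup V] [Module ℂ V] (ρ : RamondRep V)

theorem c_zero (hV : ∃ v : V, v ≠ 0) : ρ.c₀ = 0 := by
  obtain ⟨v, hv⟩ := hV
  have E1 := ρ.rel_GpGm 0 (-2) (ρ.L 2 v)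
  have E2 := congrArg (ρ.L 2) (ρ.rel_GpGm 0 (-2) v)
  have A1 := ρ.rel_LGp 2 0 (ρ.Gm (-2) v)
  have A2 := congrArg (ρ.Gp 0) (ρ.rel_LGm 2 (-2) v)
  have A3 := ρ.rel_LGm 2 (-2) (ρ.Gp 0 v)
  have A4 := congrArg (ρ.Gm (-2)) (ρ.rel_LGp 2 0 v)
  have B1 := ρ.rel_GpGm 2 (-2) v
  have B2 := ρ.rel_GpGm 0 0 v
  have C1 := ρ.rel_LL 2 (-2) v
  have C2 := ρ.rel_LH 2 (-2) v
  norm_num at E1 E2 A1 A2 A3 A4 B1 B2 C1 C2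
  have h : (2 * ρ.c₀) • v = 0 := by
    linear_combination (norm := module) E1 - E2 + A1 + A2 + A3 + A4 - B1 - (3 : ℂ) • B2 + (2 : ℂ) • C1
      - (2 : ℂ) • C2
  have h2 := (smul_eq_zero.1 h).resolve_right hv
  simpa using h2

/-- Shifted Virasoro operators. -/
noncomputable def d (n : ℤ) : V →ₗ[ℂ] V := ρ.L n - ((n : ℂ) / 2) • ρ.H n

theorem d_apply (n : ℤ) (v : V) : ρ.d n v = ρ.L n v - ((n : ℂ) / 2) • ρ.H n v := rfl

theorem L_apply (n : ℤ) (v : V) : ρ.L n v = ρ.d n v + ((n : ℂ) / 2) • ρ.H n v := by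
  rw [d_apply]; module

theorem HH (hc : ρ.c₀ = 0) (m n : ℤ) (v : V) : ρ.H m (ρ.H n v) = ρ.H n (ρ.H m v) := by
  have := ρ.rel_HH m n v
  rw [hc, mul_zero, zero_smul] at this
  exact sub_eq_zero.1 this

theorem dH (hc : ρ.c₀ = 0) (m n : ℤ) (v : V) :
    ρ.d m (ρ.H n v) = ρ.H n (ρ.d m v) + (n : ℂ) • ρ.H (m + n) v := by
  have h1 := ρ.rel_LH m n v
  have h2 := ρ.HH hc m n v
  rw [d_apply, d_apply, map_sub, map_smul]
  linear_combination (norm := module) h1 - ((m : ℂ) / 2) • h2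

theorem dd (hc : ρ.c₀ = 0) (k l : ℤ) (v : V) :
    ρ.d k (ρ.d l v) = ρ.d l (ρ.d k v) + ((l : ℂ) - k) • ρ.d (k + l) v := by
  have h1 := ρ.rel_LL k l v
  have h2 := ρ.rel_LH k l v
  have h3 := ρ.rel_LH l k v
  have h4 := ρ.HH hc k l v
  rw [hc, mul_zero, zero_smul, add_zero] at h1
  rw [add_comm l k] at h3
  simp only [d_apply, map_sub, map_smul]
  push_cast
  linear_combination (norm := module) h1 - ((l : ℂ) / 2) • h2 + ((k : ℂ) / 2) • h3
    + ((k : ℂ) * l / 4) • h4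

theorem dGm (m p : ℤ) (v : V) :
    ρ.d m (ρ.Gm p v) = ρ.Gm p (ρ.d m v) + (p : ℂ) • ρ.Gm (p + m) v := by
  have h1 := ρ.rel_LGm m p v
  have h2 := ρ.rel_HGm m p v
  rw [add_comm m p] at h2
  simp only [d_apply, map_sub, map_smul]
  linear_combination (norm := module) h1 - ((m : ℂ) / 2) • h2

theorem dGp (m p : ℤ) (v : V) :
    ρ.d m (ρ.Gp p v) = ρ.Gp p (ρ.d m v) + ((p : ℂ) - m) • ρ.Gp (p + m) v := by
  have h1 := ρ.rel_LGp m p v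
  have h2 := ρ.rel_HGp m p v
  rw [add_comm m p] at h2
  simp only [d_apply, map_sub, map_smul]
  linear_combination (norm := module) h1 - ((m : ℂ) / 2) • h2

theorem HGm (m p : ℤ) (v : V) : ρ.H m (ρ.Gm p v) = ρ.Gm p (ρ.H m v) - ρ.Gm (p + m) v := by
  have h2 := ρ.rel_HGm m p v
  rw [add_comm m p] at h2
  linear_combination (norm := module) h2

theorem HGp (m p : ℤ) (v : V) : ρ.H m (ρ.Gp p v) = ρ.Gp p (ρ.H m v) + ρ.Gp (p + m) v := by
  have h2 := ρ.rel_HGp m p v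
  rw [add_comm m p] at h2
  linear_combination (norm := module) h2

theorem GmGp (hc : ρ.c₀ = 0) (p q : ℤ) (v : V) : ρ.Gm q (ρ.Gp p v) =
    -ρ.Gp p (ρ.Gm q v) + (-2 : ℂ) • ρ.d (p + q) v - (2 * q : ℂ) • ρ.H (p + q) v := by
  have h1 := ρ.rel_GpGm p q v
  rw [hc, mul_zero, zero_smul, add_zero] at h1
  rw [d_apply]
  push_cast
  linear_combination (norm := module) h1

/-- Homogeneous components. -/
noncomputable def hom (μ σ : ℂ) (τ : ZMod 2) : Submodule ℂ V :=
  ρ.wt μ ⊓ Module.End.eigenspace (ρ.H 0) σ ⊓ ρ.parity τ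

theorem mem_hom {μ σ : ℂ} {τ : ZMod 2} {v : V} : v ∈ ρ.hom μ σ τ ↔
    ρ.L 0 v = μ • v ∧ ρ.H 0 v = σ • v ∧ v ∈ ρ.parity τ := by
  rw [hom, Submodule.mem_inf, Submodule.mem_inf, wt, Module.End.mem_eigenspace_iff,
    Module.End.mem_eigenspace_iff, and_assoc]

theorem z2cases (τ : ZMod 2) : τ = 0 ∨ τ = 1 := by
  revert τ; decide

theorem parity_zero : ρ.parity 0 = ρ.even := if_pos rfl

theorem parity_one : ρ.parity 1 = ρ.odd := if_neg (by decide)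

theorem L_parity (m : ℤ) (τ : ZMod 2) (v : V) (hv : v ∈ ρ.parity τ) : ρ.L m v ∈ ρ.parity τ := by
  rcases z2cases τ with rfl | rfl
  · rw [parity_zero] at *; exact ρ.L_even m v hv
  · rw [parity_one] at *; exact ρ.L_odd m v hv

theorem H_parity (m : ℤ) (τ : ZMod 2) (v : V) (hv : v ∈ ρ.parity τ) : ρ.H m v ∈ ρ.parity τ := by
  rcases z2cases τ with rfl | rfl
  · rw [parity_zero] at *; exact ρ.H_even m v hv
  · rw [parity_one] at *; exact ρ.H_odd m v hv

theorem Gp_parity (m : ℤ) (τ : ZMod 2) (v : V) (hv : v ∈ ρ.parity τ) :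
    ρ.Gp m v ∈ ρ.parity (τ + 1) := by
  rcases z2cases τ with rfl | rfl
  · rw [zero_add, parity_one]; rw [parity_zero] at hv; exact ρ.Gp_even m v hv
  · rw [show (1 : ZMod 2) + 1 = 0 by decide, parity_zero]
    rw [parity_one] at hv; exact ρ.Gp_odd m v hv

theorem Gm_parity (m : ℤ) (τ : ZMod 2) (v : V) (hv : v ∈ ρ.parity τ) :
    ρ.Gm m v ∈ ρ.parity (τ + 1) := by
  rcases z2cases τ with rfl | rfl
  · rw [zero_add, parity_one]; rw [parity_zero] at hv; exact ρ.Gm_even m v hv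
  · rw [show (1 : ZMod 2) + 1 = 0 by decide, parity_zero]
    rw [parity_one] at hv; exact ρ.Gm_odd m v hv

theorem hom_H (hc : ρ.c₀ = 0) {μ σ : ℂ} {τ : ZMod 2} (m : ℤ) (v : V) (hv : v ∈ ρ.hom μ σ τ) :
    ρ.H m v ∈ ρ.hom (μ + m) σ τ := by
  rw [mem_hom] at hv ⊢
  obtain ⟨h1, h2, h3⟩ := hv
  refine ⟨?_, ?_, ρ.H_parity m τ v h3⟩
  · have := ρ.rel_LH 0 m v
    rw [h1, map_smul, zero_add] at this
    linear_combination (norm := module) this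
  · rw [ρ.HH hc, h2, map_smul]

theorem hom_d (hc : ρ.c₀ = 0) {μ σ : ℂ} {τ : ZMod 2} (m : ℤ) (v : V) (hv : v ∈ ρ.hom μ σ τ) :
    ρ.d m v ∈ ρ.hom (μ + m) σ τ := by
  have hv' := hv
  rw [mem_hom] at hv ⊢
  obtain ⟨h1, h2, h3⟩ := hv
  refine ⟨?_, ?_, ?_⟩
  · have := ρ.dd hc 0 m v
    have e : ∀ x, ρ.d 0 x = ρ.L 0 x := by intro x; simp [d_apply]
    rw [e, e, h1, map_smul, zero_add] at this
    push_cast at this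
    linear_combination (norm := module) this
  · have := ρ.dH hc m 0 v
    rw [h2, map_smul] at this
    push_cast at this
    linear_combination (norm := module) -this
  · rw [d_apply]
    exact sub_mem (ρ.L_parity m τ v h3) (Submodule.smul_mem _ _ (ρ.H_parity m τ v h3))

theorem hom_Gp {μ σ : ℂ} {τ : ZMod 2} (m : ℤ) (v : V) (hv : v ∈ ρ.hom μ σ τ) :
    ρ.Gp m v ∈ ρ.hom (μ + m) (σ + 1) (τ + 1) := by
  rw [mem_hom] at hv ⊢
  obtain ⟨h1, h2, h3⟩ := hv
  refine ⟨?_, ?_, ρ.Gp_parity m τ v h3⟩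
  · have := ρ.rel_LGp 0 m v
    rw [h1, map_smul, add_zero] at this
    push_cast at this
    linear_combination (norm := module) this
  · rw [ρ.HGp, h2, map_smul, add_zero]; module

theorem hom_Gm {μ σ : ℂ} {τ : ZMod 2} (m : ℤ) (v : V) (hv : v ∈ ρ.hom μ σ τ) :
    ρ.Gm m v ∈ ρ.hom (μ + m) (σ - 1) (τ + 1) := by
  rw [mem_hom] at hv ⊢
  obtain ⟨h1, h2, h3⟩ := hv
  refine ⟨?_, ?_, ρ.Gm_parity m τ v h3⟩
  · have := ρ.rel_LGm 0 m v
    rw [h1, map_smul, add_zero] at this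
    push_cast at this
    linear_combination (norm := module) this
  · rw [ρ.HGm, h2, map_smul, add_zero]; module

theorem fin_of_le {p : ℕ} (hp : ∀ (μ : ℂ) (τ : ZMod 2),
    Module.rank ℂ ↥(ρ.wt μ ⊓ ρ.parity τ) ≤ (p : Cardinal)) {μ : ℂ} {τ : ZMod 2}
    {X : Submodule ℂ V} (hX : X ≤ ρ.wt μ ⊓ ρ.parity τ) :
    FiniteDimensional ℂ X ∧ Module.finrank ℂ X ≤ p := by
  have h1 : Module.rank ℂ X ≤ (p : Cardinal) := (Submodule.rank_mono hX).trans (hp μ τ)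
  have : FiniteDimensional ℂ X :=
    Module.rank_lt_aleph0_iff.1 (h1.trans_lt (Cardinal.natCast_lt_aleph0))
  refine ⟨this, ?_⟩
  rw [← Module.finrank_eq_rank] at h1
  exact_mod_cast h1

theorem hom_le (μ σ : ℂ) (τ : ZMod 2) : ρ.hom μ σ τ ≤ ρ.wt μ ⊓ ρ.parity τ :=
  inf_le_inf_right _ inf_le_left

/-- The Heisenberg-Virasoro module carried by a stable family of subspaces. -/
noncomputable def mkHV (hc : ρ.c₀ = 0) (p : ℕ) (hp : ∀ (μ : ℂ) (τ : ZMod 2),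
    Module.rank ℂ ↥(ρ.wt μ ⊓ ρ.parity τ) ≤ (p : Cardinal)) (lam σ : ℂ) (τ : ZMod 2)
    (hσ : σ ≠ 0) (X : ℤ → Submodule ℂ V) (hX : ∀ j : ℤ, X j ≤ ρ.hom (lam + j) σ τ)
    (hXH : ∀ m j, ∀ v ∈ X j, ρ.H m v ∈ X (j + m)) (hXd : ∀ m j, ∀ v ∈ X j, ρ.d m v ∈ X (j + m)) :
    HV V where
  h := ρ.H
  d := ρ.d
  W := X
  s := σ
  P := p
  hs := hσ
  hh := ρ.HH hc
  dh := ρ.dH hc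
  hW := hXH
  dW := hXd
  h0 := fun j v hv => (ρ.mem_hom.1 (hX j hv)).2.1
  fin := fun j => (ρ.fin_of_le hp ((hX j).trans (ρ.hom_le _ _ _))).1
  rk := fun j => (ρ.fin_of_le hp ((hX j).trans (ρ.hom_le _ _ _))).2

/-- The full homogeneous Heisenberg-Virasoro module. -/
noncomputable def homHV (hc : ρ.c₀ = 0) (p : ℕ) (hp : ∀ (μ : ℂ) (τ : ZMod 2),
    Module.rank ℂ ↥(ρ.wt μ ⊓ ρ.parity τ) ≤ (p : Cardinal)) (lam σ : ℂ) (τ : ZMod 2)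
    (hσ : σ ≠ 0) : HV V :=
  ρ.mkHV hc p hp lam σ τ hσ (fun j => ρ.hom (lam + j) σ τ) (fun _ => le_rfl)
    (fun m j v hv => by
      have := ρ.hom_H hc m v hv
      push_cast; rwa [← add_assoc])
    (fun m j v hv => by
      have := ρ.hom_d hc m v hv
      push_cast; rwa [← add_assoc])

end RamondRep

theorem pow_zero_of_le {V : Type*} [AddCommGroup V] [Module ℂ V] (T : Module.End ℂ V) {n N : ℕ}
    (h : n ≤ N) (w : V) (hw : (T ^ n) w = 0) : (T ^ N) w = 0 := by
  rw [show N = (N - n) + n by omega, pow_add, Module.End.mul_apply, hw, map_zero]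

namespace RamondRep

variable {V : Type} [AddCommGroup V] [Module ℂ V] (ρ : RamondRep V)

theorem exists_rel (hc : ρ.c₀ = 0) (p : ℕ) (hp : ∀ (μ : ℂ) (τ : ZMod 2),
    Module.rank ℂ ↥(ρ.wt μ ⊓ ρ.parity τ) ≤ (p : Cardinal)) (lam σ : ℂ) (τ : ZMod 2)
    (h0 : σ ≠ 0) (h1 : σ - 1 ≠ 0) :
    ∃ N : ℕ, ∀ (m : ℤ) (w : V), (∃ j : ℤ, w ∈ ρ.hom (lam + j) σ τ) →
      ∑ i ∈ Finset.range (4 * N + 1),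
      ((σ ^ i * (-1) ^ (4 * N - i)) * ((4 * N).choose i : ℂ)) •
        ρ.Gm (m + i) ((ρ.H 1 ^ (4 * N - i) : Module.End ℂ V) w) = 0 := by
  obtain ⟨n0, hn0⟩ := (ρ.homHV hc p hp lam σ τ h0).nilp 1 1
  obtain ⟨n1, hn1⟩ := (ρ.homHV hc p hp lam (σ - 1) (τ + 1) h1).nilp 1 1
  refine ⟨max n0 n1, fun m w hw => ?_⟩
  refine rel_lemma (ρ.H 1) (ρ.H 2) (LinearMap.ext (fun v => ρ.HH hc 1 2 v)) ρ.Gm ?_ ?_ σ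
    (fun w => ∃ j : ℤ, w ∈ ρ.hom (lam + j) σ τ)
    (fun w => ∃ j : ℤ, w ∈ ρ.hom (lam + j) (σ - 1) (τ + 1)) (max n0 n1) ?_ ?_ ?_ ?_ m w hw
  · intro m
    ext v
    simp only [LinearMap.sub_apply, Module.End.mul_apply]
    rw [ρ.HGm]; abel
  · intro m
    ext v
    simp only [LinearMap.sub_apply, Module.End.mul_apply]
    rw [ρ.HGm]; abel
  · rintro w ⟨j, hj⟩
    refine ⟨j + 2, sub_mem ?_ (Submodule.smul_mem _ _ ?_)⟩
    · have := ρ.hom_H hc 1 _ (ρ.hom_H hc 1 w hj)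
      push_cast at this ⊢
      rw [show lam + ((j : ℂ) + 2) = lam + j + 1 + 1 by ring]
      exact this
    · have := ρ.hom_H hc 2 w hj
      push_cast at this ⊢
      rw [← add_assoc]
      exact this
  · rintro m w ⟨j, hj⟩
    refine ⟨j + m, ?_⟩
    have := ρ.hom_Gm m w hj
    push_cast
    rwa [← add_assoc]
  · rintro w ⟨j, hj⟩
    exact pow_zero_of_le _ (le_max_left _ _) _ (hn0 j w hj)
  · rintro w ⟨j, hj⟩
    exact pow_zero_of_le _ (le_max_right _ _) _ (hn1 j w hj)

theorem exists_window (hc : ρ.c₀ = 0) (p : ℕ) (hp : ∀ (μ : ℂ) (τ : ZMod 2),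
    Module.rank ℂ ↥(ρ.wt μ ⊓ ρ.parity τ) ≤ (p : Cardinal)) (lam σ : ℂ) (τ : ZMod 2)
    (h0 : σ ≠ 0) (h1 : σ - 1 ≠ 0) :
    ∃ M : ℕ, ∀ Θ : V →ₗ[ℂ] V,
      (∀ c : ℕ, c < M → ∀ (j : ℤ), ∀ w ∈ ρ.hom (lam + j) σ τ, Θ (ρ.Gm c w) = 0) →
      ∀ (c j : ℤ), ∀ w ∈ ρ.hom (lam + j) σ τ, Θ (ρ.Gm c w) = 0 := by
  obtain ⟨N, hN⟩ := ρ.exists_rel hc p hp lam σ τ h0 h1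
  refine ⟨4 * N, fun Θ hΘ => ?_⟩
  generalize 4 * N = M at hN hΘ
  have hpow : ∀ (k : ℕ) (j : ℤ), ∀ w ∈ ρ.hom (lam + j) σ τ,
      ∃ j' : ℤ, (ρ.H 1 ^ k : Module.End ℂ V) w ∈ ρ.hom (lam + j') σ τ := by
    intro k
    induction k with
    | zero => intro j w hw; exact ⟨j, by simpa using hw⟩
    | succ k ih =>
      intro j w hw
      rw [pow_succ, Module.End.mul_apply]
      refine ih (j + 1) _ ?_
      have := ρ.hom_H hc 1 w hw
      push_cast at this ⊢
      rwa [← add_assoc]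
  have hsurj : ∀ (k : ℕ) (j : ℤ), ∀ w ∈ ρ.hom (lam + j) σ τ,
      ∃ j' : ℤ, ∃ w' ∈ ρ.hom (lam + j') σ τ, (ρ.H 1 ^ k : Module.End ℂ V) w' = w := by
    intro k
    induction k with
    | zero => intro j w hw; exact ⟨j, w, hw, by simp⟩
    | succ k ih =>
      intro j w hw
      obtain ⟨w1, hw1, e1⟩ := (ρ.homHV hc p hp lam σ τ h0).surj j w hw
      obtain ⟨j', w', hw', e'⟩ := ih (j - 1) w1 hw1
      refine ⟨j', w', hw', ?_⟩
      rw [pow_succ', Module.End.mul_apply, e']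
      exact e1
  have key : ∀ n : ℕ, ∀ c : ℤ, -(n : ℤ) ≤ c → c < M + n → ∀ (j : ℤ), ∀ w ∈ ρ.hom (lam + j) σ τ,
      Θ (ρ.Gm c w) = 0 := by
    intro n
    induction n with
    | zero =>
      intro c hc1 hc2
      obtain ⟨c, rfl⟩ := Int.eq_ofNat_of_zero_le (by simpa using hc1)
      exact hΘ c (by simpa using hc2)
    | succ n ih =>
      intro c hc1 hc2 j w hw
      push_cast at hc1 hc2
      by_cases hin : -(n : ℤ) ≤ c ∧ c < M + n
      · exact ih c hin.1 hin.2 j w hw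
      by_cases hup : c = M + n
      · have h2 := congrArg Θ (hN n w ⟨j, hw⟩)
        rw [Finset.sum_range_succ, map_add, map_sum, map_zero, Finset.sum_eq_zero, zero_add] at h2
        · simp only [Nat.sub_self, pow_zero, mul_one, Nat.choose_self, Nat.cast_one,
            Module.End.one_apply, map_smul] at h2
          rw [hup, add_comm]
          exact (smul_eq_zero.1 h2).resolve_left (pow_ne_zero _ h0)
        · intro i hi
          rw [Finset.mem_range] at hi
          obtain ⟨j', hj'⟩ := hpow (M - i) j w hw
          rw [map_smul, ih (n + i) (by omega) (by omega) j' _ hj', smul_zero]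
      · have hlow : c = -n - 1 := by omega
        obtain ⟨j', w', hw', rfl⟩ := hsurj M j w hw
        have h2 := congrArg Θ (hN (-n - 1) w' ⟨j', hw'⟩)
        rw [Finset.sum_range_succ', map_add, map_sum, map_zero, Finset.sum_eq_zero, zero_add] at h2
        · simp only [Nat.sub_zero, pow_zero, one_mul, Nat.choose_zero_right, Nat.cast_one, mul_one,
            map_smul, Nat.cast_zero, add_zero] at h2
          rw [hlow]
          exact (smul_eq_zero.1 h2).resolve_left (pow_ne_zero _ (by norm_num))
        · intro i hi
          rw [Finset.mem_range] at hi
          obtain ⟨j'', hj''⟩ := hpow (M - (i + 1)) j' w' hw'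
          rw [map_smul, ih _ (by push_cast; omega) (by push_cast; omega) j'' _ hj'', smul_zero]
  intro c j w hw
  exact key (c.natAbs + 1) c (by omega) (by omega) j w hw

theorem exists_lowest (hc : ρ.c₀ = 0) (p : ℕ) (hp : ∀ (μ : ℂ) (τ : ZMod 2),
    Module.rank ℂ ↥(ρ.wt μ ⊓ ρ.parity τ) ≤ (p : Cardinal)) (lam σ : ℂ) (τ : ZMod 2)
    (hσ : ∀ k : ℕ, σ ≠ k) (hne : ρ.hom lam σ τ ≠ ⊥) :
    ∃ (lam' : ℂ) (i : ℕ) (τ' : ZMod 2) (w : V), w ≠ 0 ∧ w ∈ ρ.hom lam' (σ - i) τ' ∧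
      ∀ m, ρ.Gm m w = 0 := by
  obtain ⟨M, hM⟩ := ρ.exists_window hc p hp lam σ τ (by simpa using hσ 0)
    (by have := hσ 1; rw [Nat.cast_one] at this; exact sub_ne_zero.2 this)
  have key : ∀ b : ℕ, ∃ (Θ : V →ₗ[ℂ] V) (ε : ℂ) (r : ℤ) (i : ℕ), ε ≠ 0 ∧
      (∀ m v, Θ (ρ.Gm m v) = ε • ρ.Gm m (Θ v)) ∧
      (∀ (μ : ℂ) (s : ℂ) (t : ZMod 2), ∀ v ∈ ρ.hom μ s t, Θ v ∈ ρ.hom (μ + r) (s - i) (t + i)) ∧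
      (∃ j : ℤ, ∃ w ∈ ρ.hom (lam + j) σ τ, Θ w ≠ 0) ∧
      (∀ c : ℕ, c < b → ∀ (j : ℤ), ∀ w ∈ ρ.hom (lam + j) σ τ, Θ (ρ.Gm c w) = 0) := by
    intro b
    induction b with
    | zero =>
      obtain ⟨w, hw, hw0⟩ := Submodule.exists_mem_ne_zero_of_ne_bot hne
      refine ⟨LinearMap.id, 1, 0, 0, one_ne_zero, by simp, by simp, ⟨0, w, by simpa using hw, hw0⟩,
        by simp⟩
    | succ b ih =>
      obtain ⟨Θ, ε, r, i, hε, h1, h2, h3, h4⟩ := ih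
      by_cases hall : ∀ (j : ℤ), ∀ w ∈ ρ.hom (lam + j) σ τ, Θ (ρ.Gm b w) = 0
      · refine ⟨Θ, ε, r, i, hε, h1, h2, h3, fun c hc j w hw => ?_⟩
        rcases Nat.lt_succ_iff_lt_or_eq.1 hc with hc | rfl
        · exact h4 c hc j w hw
        · exact hall j w hw
      · push Not at hall
        have hanti : ∀ m n v, ρ.Gm m (ρ.Gm n v) = - ρ.Gm n (ρ.Gm m v) := fun m n v =>
          eq_neg_of_add_eq_zero_left (ρ.rel_GmGm m n v)
        refine ⟨Θ ∘ₗ ρ.Gm b, -ε, b + r, i + 1, neg_ne_zero.2 hε, ?_, ?_, hall, ?_⟩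
        · intro m v
          rw [LinearMap.comp_apply, LinearMap.comp_apply, hanti, map_neg, h1]
          module
        · intro μ s t v hv
          have := h2 _ _ _ _ (ρ.hom_Gm b v hv)
          push_cast at this ⊢
          rw [show μ + ((b : ℂ) + r) = μ + b + r by ring,
            show s - ((i : ℂ) + 1) = s - 1 - i by ring,
            show t + ((i : ZMod 2) + 1) = t + 1 + i by ring]
          exact this
        · intro c hc j w hw
          rw [LinearMap.comp_apply]
          rcases Nat.lt_succ_iff_lt_or_eq.1 hc with hc | rfl
          · rw [h1, h4 c hc j w hw, map_zero, smul_zero]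
          · have := ρ.rel_GmGm c c w
            have h0 : ρ.Gm c (ρ.Gm c w) = 0 := by
              rw [← two_smul ℂ] at this
              exact (smul_eq_zero.1 this).resolve_left two_ne_zero
            rw [h0, map_zero]
  obtain ⟨Θ, ε, r, i, hε, h1, h2, ⟨j, w, hw, hw0⟩, h4⟩ := key M
  refine ⟨_, i, _, Θ w, hw0, h2 _ _ _ w hw, fun m => ?_⟩
  have := hM Θ h4 m j w hw
  rw [h1] at this
  exact (smul_eq_zero.1 this).resolve_left hε

/-- The lowest component is a tensor-density type module. -/
theorem exists_u (hc : ρ.c₀ = 0) (p : ℕ) (hp : ∀ (μ : ℂ) (τ : ZMod 2),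
    Module.rank ℂ ↥(ρ.wt μ ⊓ ρ.parity τ) ≤ (p : Cardinal)) (lam σ : ℂ) (τ : ZMod 2)
    (hσ : ∀ k : ℕ, σ ≠ k) (hne : ρ.hom lam σ τ ≠ ⊥) :
    ∃ (lam s β : ℂ) (τ : ZMod 2) (u : ℤ → V), s ≠ 0 ∧ u 0 ≠ 0 ∧
      (∀ j : ℤ, u j ∈ ρ.hom (lam + j) s τ) ∧ (∀ m j, ρ.Gm m (u j) = 0) ∧
      (∀ m j, ρ.H m (u j) = s • u (j + m)) ∧
      (∀ m j : ℤ, ρ.d m (u j) = (lam + j + β * m) • u (j + m)) := by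
  obtain ⟨lam', i, τ', w, hw0, hw, hG⟩ := ρ.exists_lowest hc p hp lam σ τ hσ hne
  have hs : σ - i ≠ 0 := sub_ne_zero.2 (hσ i)
  let K : Submodule ℂ V := ⨅ m, LinearMap.ker (ρ.Gm m)
  have hK : ∀ v, v ∈ K ↔ ∀ m, ρ.Gm m v = 0 := by
    intro v
    simp only [K, Submodule.mem_iInf, LinearMap.mem_ker]
  let R : HV V := ρ.mkHV hc p hp lam' (σ - i) τ' hs (fun j => ρ.hom (lam' + j) (σ - i) τ' ⊓ K)
    (fun _ => inf_le_left)
    (by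
      intro m j v hv
      refine ⟨?_, (hK _).2 fun n => ?_⟩
      · have := ρ.hom_H hc m v hv.1
        push_cast; rwa [← add_assoc]
      · have h1 := (hK v).1 hv.2
        have h2 := ρ.HGm m n v
        rw [h1, h1, map_zero, sub_zero] at h2
        exact h2.symm)
    (by
      intro m j v hv
      refine ⟨?_, (hK _).2 fun n => ?_⟩
      · have := ρ.hom_d hc m v hv.1
        push_cast; rwa [← add_assoc]
      · have h1 := (hK v).1 hv.2
        have h2 := ρ.dGm m n v
        rw [h1, h1, map_zero, smul_zero, add_zero] at h2
        exact h2.symm)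
  obtain ⟨β, u, hu, hu0, hh, hd⟩ := R.start lam' (ρ.dd hc)
    (by
      intro v hv
      have h1 := (ρ.mem_hom.1 hv.1).1
      rw [Int.cast_zero, add_zero] at h1
      rw [← h1]
      show ρ.d 0 v = _
      simp [d_apply])
    (by
      refine (Submodule.ne_bot_iff _).2 ⟨w, ⟨?_, (hK w).2 hG⟩, hw0⟩
      simpa using hw)
  exact ⟨lam', σ - i, β, τ', u, hs, hu0, fun j => (hu j).1, fun m j => (hK _).1 (hu j).2 m, hh, hd⟩

end RamondRep

namespace RamondRep

variable {V : Type} [AddCommGroup V] [Module ℂ V] (ρ : RamondRep V)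

/-- The subspaces generated from `X` by applying products of `G⁺`. -/
def B (X : ℤ → Submodule ℂ V) : ℕ → ℤ → Submodule ℂ V
  | 0, k => X k
  | (i + 1), k => ⨆ a : ℤ, (B X i (k - a)).map (ρ.Gp a)

theorem B_succ_induction (X : ℤ → Submodule ℂ V) (i : ℕ) (k : ℤ) (S : Submodule ℂ V)
    (h : ∀ a : ℤ, ∀ v ∈ ρ.B X i (k - a), ρ.Gp a v ∈ S) : ρ.B X (i + 1) k ≤ S := by
  refine iSup_le (fun a => ?_)
  rintro _ ⟨v, hv, rfl⟩
  exact h a v hv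

theorem B_Gp (X : ℤ → Submodule ℂ V) (i : ℕ) (k m : ℤ) (v : V) (hv : v ∈ ρ.B X i k) :
    ρ.Gp m v ∈ ρ.B X (i + 1) (k + m) := by
  refine Submodule.mem_iSup_of_mem (p := fun a : ℤ => (ρ.B X i (k + m - a)).map (ρ.Gp a)) m ?_
  refine ⟨v, ?_, rfl⟩
  rw [add_sub_cancel_right]
  exact hv

theorem B_hom (lam s : ℂ) (τ : ZMod 2) (X : ℤ → Submodule ℂ V)
    (hX : ∀ k : ℤ, X k ≤ ρ.hom (lam + k) s τ) (i : ℕ) :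
    ∀ k : ℤ, ρ.B X i k ≤ ρ.hom (lam + k) (s + i) (τ + i) := by
  induction i with
  | zero => intro k; simpa [B] using hX k
  | succ i ih =>
    intro k
    refine ρ.B_succ_induction X i k _ (fun a v hv => ?_)
    have := ρ.hom_Gp a v (ih _ hv)
    push_cast at this ⊢
    rw [show lam + ((k : ℂ) - a) + a = lam + k by ring, add_assoc, add_assoc τ] at this
    exact this

theorem B_HdG (hc : ρ.c₀ = 0) (X : ℤ → Submodule ℂ V)
    (hXH : ∀ m j, ∀ v ∈ X j, ρ.H m v ∈ X (j + m)) (hXd : ∀ m j, ∀ v ∈ X j, ρ.d m v ∈ X (j + m))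
    (i : ℕ) :
    ∀ m k, ∀ v ∈ ρ.B X i k, ρ.H m v ∈ ρ.B X i (k + m) ∧ ρ.d m v ∈ ρ.B X i (k + m) := by
  induction i with
  | zero => intro m k v hv; exact ⟨hXH m k v hv, hXd m k v hv⟩
  | succ i ih =>
    intro m k
    suffices hle : ρ.B X (i + 1) k ≤ (ρ.B X (i + 1) (k + m)).comap (ρ.H m) ⊓
        (ρ.B X (i + 1) (k + m)).comap (ρ.d m) from fun v hv => hle hv
    refine ρ.B_succ_induction X i k _ (fun a v hv => ?_)
    have h1 := ih m _ v hv
    have e1 := ρ.B_Gp X i _ a _ h1.1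
    have e2 := ρ.B_Gp X i _ a _ h1.2
    have e3 := ρ.B_Gp X i _ (a + m) v hv
    rw [show k - a + m + a = k + m by ring] at e1 e2
    rw [show k - a + (a + m) = k + m by ring] at e3
    refine ⟨?_, ?_⟩
    · show ρ.H m (ρ.Gp a v) ∈ ρ.B X (i + 1) (k + m)
      rw [ρ.HGp]
      exact add_mem e1 e3
    · show ρ.d m (ρ.Gp a v) ∈ ρ.B X (i + 1) (k + m)
      rw [ρ.dGp]
      exact add_mem e2 (Submodule.smul_mem _ _ e3)

theorem B_Gm (hc : ρ.c₀ = 0) (X : ℤ → Submodule ℂ V)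
    (hXH : ∀ m j, ∀ v ∈ X j, ρ.H m v ∈ X (j + m)) (hXd : ∀ m j, ∀ v ∈ X j, ρ.d m v ∈ X (j + m))
    (hXG : ∀ m j, ∀ v ∈ X j, ρ.Gm m v = 0) (i : ℕ) :
    ∀ m k, ∀ v ∈ ρ.B X (i + 1) k, ρ.Gm m v ∈ ρ.B X i (k + m) := by
  induction i with
  | zero =>
    intro m k
    suffices hle : ρ.B X (0 + 1) k ≤ (ρ.B X 0 (k + m)).comap (ρ.Gm m) from fun v hv => hle hv
    refine ρ.B_succ_induction X 0 k _ (fun a v hv => ?_)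
    have h1 := ρ.B_HdG hc X hXH hXd 0 (a + m) _ v hv
    rw [show k - a + (a + m) = k + m by ring] at h1
    show ρ.Gm m (ρ.Gp a v) ∈ ρ.B X 0 (k + m)
    rw [ρ.GmGp hc, hXG m _ v hv, map_zero, neg_zero, zero_add]
    exact sub_mem (Submodule.smul_mem _ _ h1.2) (Submodule.smul_mem _ _ h1.1)
  | succ i ih =>
    intro m k
    suffices hle : ρ.B X (i + 1 + 1) k ≤ (ρ.B X (i + 1) (k + m)).comap (ρ.Gm m) from
      fun v hv => hle hv
    refine ρ.B_succ_induction X (i + 1) k _ (fun a v hv => ?_)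
    have h1 := ρ.B_HdG hc X hXH hXd (i + 1) (a + m) _ v hv
    rw [show k - a + (a + m) = k + m by ring] at h1
    have h2 := ρ.B_Gp X i _ a _ (ih m _ v hv)
    rw [show k - a + m + a = k + m by ring] at h2
    show ρ.Gm m (ρ.Gp a v) ∈ ρ.B X (i + 1) (k + m)
    rw [ρ.GmGp hc]
    exact sub_mem (add_mem (neg_mem h2) (Submodule.smul_mem _ _ h1.2))
      (Submodule.smul_mem _ _ h1.1)

theorem parity_le (τ : ZMod 2) : ρ.parity τ = ρ.even ∨ ρ.parity τ = ρ.odd := by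
  rcases z2cases τ with rfl | rfl
  · exact Or.inl ρ.parity_zero
  · exact Or.inr ρ.parity_one

theorem B_top (hsimple : ρ.IsSimple) (hc : ρ.c₀ = 0) (lam s : ℂ) (τ : ZMod 2)
    (X : ℤ → Submodule ℂ V)
    (hX : ∀ k : ℤ, X k ≤ ρ.hom (lam + k) s τ)
    (hXH : ∀ m j, ∀ v ∈ X j, ρ.H m v ∈ X (j + m)) (hXd : ∀ m j, ∀ v ∈ X j, ρ.d m v ∈ X (j + m))
    (hXG : ∀ m j, ∀ v ∈ X j, ρ.Gm m v = 0) (hne : X 0 ≠ ⊥) :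
    (⨆ i : ℕ, ⨆ k : ℤ, ρ.B X i k) = ⊤ := by
  set S := ⨆ i : ℕ, ⨆ k : ℤ, ρ.B X i k with hS
  have hBS : ∀ i k, ρ.B X i k ≤ S := fun i k =>
    le_iSup_of_le i (le_iSup (fun k => ρ.B X i k) k)
  have hind : ∀ T : Submodule ℂ V, (∀ i k, ∀ v ∈ ρ.B X i k, v ∈ T) → S ≤ T := fun T h =>
    iSup_le (fun i => iSup_le (fun k => h i k))
  have hgr : ρ.IsGradedSubmod S := by
    refine ⟨⟨fun m => ?_, fun m => ?_, fun m => ?_, fun m => ?_⟩, le_antisymm ?_ ?_⟩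
    · refine hind (S.comap (ρ.L m)) (fun i k v hv => ?_)
      have h1 := ρ.B_HdG hc X hXH hXd i m k v hv
      show ρ.L m v ∈ S
      rw [L_apply]
      exact add_mem (hBS _ _ h1.2) (Submodule.smul_mem _ _ (hBS _ _ h1.1))
    · refine hind (S.comap (ρ.H m)) (fun i k v hv => ?_)
      exact hBS _ _ (ρ.B_HdG hc X hXH hXd i m k v hv).1
    · refine hind (S.comap (ρ.Gp m)) (fun i k v hv => ?_)
      exact hBS _ _ (ρ.B_Gp X i k m v hv)
    · refine hind (S.comap (ρ.Gm m)) (fun i k v hv => ?_)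
      cases i with
      | zero =>
        show ρ.Gm m v ∈ S
        rw [hXG m k v hv]; exact zero_mem _
      | succ i => exact hBS _ _ (ρ.B_Gm hc X hXH hXd hXG i m k v hv)
    · refine hind _ (fun i k v hv => ?_)
      have h1 := (ρ.mem_hom.1 (ρ.B_hom lam s τ X hX i k hv)).2.2
      rcases ρ.parity_le (τ + i) with h | h
      · rw [h] at h1; exact Submodule.mem_sup_left ⟨hBS i k hv, h1⟩
      · rw [h] at h1; exact Submodule.mem_sup_right ⟨hBS i k hv, h1⟩
    · exact sup_le inf_le_left inf_le_left
  refine (hsimple.2 S hgr).resolve_left (fun hbot => hne ?_)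
  rw [eq_bot_iff, ← hbot]
  exact hBS 0 0

theorem lemZ (hsimple : ρ.IsSimple) (hc : ρ.c₀ = 0) (s : ℂ) (u0 : V) (hu0 : u0 ≠ 0)
    (hu : ρ.H 0 u0 = s • u0) (μ : ℂ) (τ : ZMod 2) (v : V) (hv : v ∈ ρ.hom μ (s + 1) τ)
    (hG : ∀ m, ρ.Gm m v = 0) : v = 0 := by
  by_contra hv0
  let K : Submodule ℂ V := ⨅ m, LinearMap.ker (ρ.Gm m)
  have hK : ∀ v, v ∈ K ↔ ∀ m, ρ.Gm m v = 0 := by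
    intro v
    simp only [K, Submodule.mem_iInf, LinearMap.mem_ker]
  let X : ℤ → Submodule ℂ V := fun k => ρ.hom (μ + k) (s + 1) τ ⊓ K
  have hXl : ∀ k : ℤ, X k ≤ ρ.hom (μ + k) (s + 1) τ := fun k => inf_le_left
  have htop := ρ.B_top hsimple hc μ (s + 1) τ X hXl
    (by
      intro m j v hv
      refine ⟨?_, (hK _).2 fun n => ?_⟩
      · have := ρ.hom_H hc m v hv.1
        push_cast; rwa [← add_assoc]
      · have h1 := (hK v).1 hv.2
        have h2 := ρ.HGm m n v
        rw [h1, h1, map_zero, sub_zero] at h2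
        exact h2.symm)
    (by
      intro m j v hv
      refine ⟨?_, (hK _).2 fun n => ?_⟩
      · have := ρ.hom_d hc m v hv.1
        push_cast; rwa [← add_assoc]
      · have h1 := (hK v).1 hv.2
        have h2 := ρ.dGm m n v
        rw [h1, h1, map_zero, smul_zero, add_zero] at h2
        exact h2.symm)
    (fun m j v hv => (hK v).1 hv.2 m)
    ((Submodule.ne_bot_iff _).2 ⟨v, ⟨by simpa using hv, (hK v).2 hG⟩, hv0⟩)
  have hle : (⊤ : Submodule ℂ V) ≤ ⨆ (t : ℂ) (_ : t ≠ s), Module.End.eigenspace (ρ.H 0) t := by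
    rw [← htop]
    refine iSup_le (fun i => iSup_le (fun k => ?_))
    refine le_trans (ρ.B_hom μ (s + 1) τ X hXl i k) ?_
    refine le_trans (inf_le_left.trans inf_le_right) ?_
    refine le_iSup₂_of_le (s + 1 + i) ?_ le_rfl
    intro h
    have h2 : ((1 + i : ℕ) : ℂ) = 0 := by push_cast; linear_combination h
    rw [Nat.cast_eq_zero] at h2
    omega
  have hdis := (Module.End.eigenspaces_iSupIndep (ρ.H 0)) s
  have := (Submodule.disjoint_def.1 hdis) u0 (Module.End.mem_eigenspace_iff.2 hu)
    (hle Submodule.mem_top)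
  exact hu0 this

theorem pick (μ : ℂ) (t : ZMod 2) (Y0 : Submodule ℂ V) (hY : Y0 ≤ ρ.wt μ ⊓ ρ.parity t)
    (htop : (⊤ : Submodule ℂ V) ≤ Y0 ⊔ ((⨆ (μ' : ℂ) (_ : μ' ≠ μ), ρ.wt μ') ⊔
      (ρ.wt μ ⊓ ρ.parity (t + 1)))) : ρ.wt μ ⊓ ρ.parity t ≤ Y0 := by
  intro v hv
  obtain ⟨y, hy, z, hz, rfl⟩ := Submodule.mem_sup.1 (htop (Submodule.mem_top (x := v)))
  obtain ⟨a, ha, b, hb, rfl⟩ := Submodule.mem_sup.1 hz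
  have hz2 : a + b ∈ ρ.wt μ ⊓ ρ.parity t := by
    have := sub_mem hv (hY hy)
    rwa [add_sub_cancel_left] at this
  have hdis := (Module.End.eigenspaces_iSupIndep (ρ.L 0)) μ
  have ha0 : a = 0 := by
    refine (Submodule.disjoint_def.1 hdis) a ?_ ha
    have := sub_mem hz2.1 hb.1
    rwa [add_sub_cancel_right] at this
  subst ha0
  rw [zero_add] at hz2 ⊢
  have hb0 : b = 0 := by
    have h1 := hz2.2
    have h2 := hb.2
    have hd := ρ.grading.disjoint
    rcases z2cases t with rfl | rfl
    · rw [zero_add] at h2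
      have h1' : b ∈ ρ.parity 0 := h1
      have h2' : b ∈ ρ.parity 1 := h2
      rw [parity_zero] at h1'
      rw [parity_one] at h2'
      exact Submodule.disjoint_def.1 hd b h1' h2'
    · rw [show (1 : ZMod 2) + 1 = 0 by decide] at h2
      have h1' : b ∈ ρ.parity 1 := h1
      have h2' : b ∈ ρ.parity 0 := h2
      rw [parity_zero] at h2'
      rw [parity_one] at h1'
      exact Submodule.disjoint_def.1 hd b h2' h1'
  rw [hb0, add_zero]
  exact hy

theorem rank_pair (a b : V) : Module.rank ℂ ↥(Submodule.span ℂ ({a, b} : Set V)) ≤ 2 := by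
  refine (rank_span_le _).trans ((Cardinal.mk_insert_le).trans ?_)
  rw [Cardinal.mk_singleton]
  exact le_of_eq one_add_one_eq_two

theorem bound_of_u (hsimple : ρ.IsSimple) (hc : ρ.c₀ = 0) (lam s β : ℂ) (τ : ZMod 2) (u : ℤ → V)
    (hu0 : u 0 ≠ 0) (hu : ∀ j : ℤ, u j ∈ ρ.hom (lam + j) s τ) (hG : ∀ m j, ρ.Gm m (u j) = 0)
    (hH : ∀ m j, ρ.H m (u j) = s • u (j + m))
    (hd : ∀ m j : ℤ, ρ.d m (u j) = (lam + j + β * m) • u (j + m)) (μ : ℂ) (t : ZMod 2) :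
    Module.rank ℂ ↥(ρ.wt μ ⊓ ρ.parity t) ≤ 2 := by
  have hu00 : ρ.H 0 (u 0) = s • u 0 := (ρ.mem_hom.1 (hu 0)).2.1
  have hsq : ∀ a v, ρ.Gp a (ρ.Gp a v) = 0 := by
    intro a v
    have := ρ.rel_GpGp a a v
    rw [← two_smul ℂ] at this
    exact (smul_eq_zero.1 this).resolve_left two_ne_zero
  have hanti : ∀ a b v, ρ.Gp a (ρ.Gp b v) = - ρ.Gp b (ρ.Gp a v) := fun a b v =>
    eq_neg_of_add_eq_zero_left (ρ.rel_GpGp a b v)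
  have hone : ∀ a k : ℤ, ρ.Gp a (u (k - a)) =
      (1 - a : ℂ) • ρ.Gp 0 (u k) + (a : ℂ) • ρ.Gp 1 (u (k - 1)) := by
    intro a k
    have hGG : ∀ m b : ℤ, ρ.Gm m (ρ.Gp b (u (k - b))) =
        (-2 * (lam + k - b + β * (b + m) + m * s) : ℂ) • u (k + m) := by
      intro m b
      rw [ρ.GmGp hc, hG, map_zero, hd, hH, show k - b + (b + m) = k + m by ring]
      push_cast
      module
    have hmem : ∀ b : ℤ, ρ.Gp b (u (k - b)) ∈ ρ.hom (lam + k) (s + 1) (τ + 1) := by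
      intro b
      have := ρ.hom_Gp b _ (hu (k - b))
      push_cast at this
      rwa [show lam + ((k : ℂ) - b) + b = lam + k by ring] at this
    have m0 := hmem 0
    have g0 := fun m => hGG m 0
    rw [sub_zero] at m0 g0
    have hz := ρ.lemZ hsimple hc s (u 0) hu0 hu00 (lam + k) (τ + 1)
      (ρ.Gp a (u (k - a)) - ((1 - a : ℂ) • ρ.Gp 0 (u k) + (a : ℂ) • ρ.Gp 1 (u (k - 1))))
      (sub_mem (hmem a) (add_mem (Submodule.smul_mem _ _ m0) (Submodule.smul_mem _ _ (hmem 1))))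
      (by
        intro m
        rw [map_sub, map_add, map_smul, map_smul, hGG, g0, hGG]
        push_cast
        module)
    exact sub_eq_zero.1 hz
  have htwo : ∀ a k : ℤ, ρ.Gp a (ρ.Gp 0 (u (k - a))) = (-a : ℂ) • ρ.Gp 0 (ρ.Gp 1 (u (k - 1))) := by
    intro a k
    rw [hanti, hone, map_add, map_smul, map_smul, hsq]
    module
  have htwo' : ∀ a k : ℤ, ρ.Gp a (ρ.Gp 1 (u (k - a - 1))) =
      (1 - a : ℂ) • ρ.Gp 0 (ρ.Gp 1 (u (k - 1))) := by
    intro a k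
    rw [hanti, show k - a - 1 = (k - 1) - a by ring, hone, map_add, map_smul, map_smul, hsq,
      hanti 1 0]
    module
  have hthree : ∀ a j : ℤ, ρ.Gp a (ρ.Gp 0 (ρ.Gp 1 (u j))) = 0 := by
    intro a j
    have h1 := hone a (j + a)
    rw [add_sub_cancel_right] at h1
    rw [hanti a 0, hanti a 1, map_neg, h1]
    simp only [map_add, map_smul, hsq, hanti 1 0, map_neg]
    simp [hsq]
  let X : ℤ → Submodule ℂ V := fun k => Submodule.span ℂ {u k}
  have hXm : ∀ k, ∀ v ∈ X k, ∃ c : ℂ, v = c • u k := by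
    intro k v hv
    obtain ⟨c, hc⟩ := Submodule.mem_span_singleton.1 hv
    exact ⟨c, hc.symm⟩
  have huX : ∀ k, u k ∈ X k := fun k => Submodule.mem_span_singleton_self _
  have hXl : ∀ k : ℤ, X k ≤ ρ.hom (lam + k) s τ := fun k =>
    (Submodule.span_singleton_le_iff_mem _ _).2 (hu k)
  have htop := ρ.B_top hsimple hc lam s τ X hXl
    (by
      intro m j v hv
      obtain ⟨c, rfl⟩ := hXm j v hv
      rw [map_smul, hH]
      exact Submodule.smul_mem _ _ (Submodule.smul_mem _ _ (huX _)))
    (by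
      intro m j v hv
      obtain ⟨c, rfl⟩ := hXm j v hv
      rw [map_smul, hd]
      exact Submodule.smul_mem _ _ (Submodule.smul_mem _ _ (huX _)))
    (by
      intro m j v hv
      obtain ⟨c, rfl⟩ := hXm j v hv
      rw [map_smul, hG, smul_zero])
    (by
      refine (Submodule.ne_bot_iff _).2 ⟨u 0, huX 0, hu0⟩)
  let P : ℤ → Submodule ℂ V := fun k => Submodule.span ℂ {u k, ρ.Gp 0 (ρ.Gp 1 (u (k - 1)))}
  let Q : ℤ → Submodule ℂ V := fun k => Submodule.span ℂ {ρ.Gp 0 (u k), ρ.Gp 1 (u (k - 1))}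
  have h0 : ∀ k, ρ.B X 0 k ≤ P k := fun k =>
    (Submodule.span_singleton_le_iff_mem _ _).2 (Submodule.subset_span (by simp))
  have h1 : ∀ k, ρ.B X 1 k ≤ Q k := by
    intro k
    refine ρ.B_succ_induction X 0 k _ (fun a v hv => ?_)
    obtain ⟨c, rfl⟩ := hXm _ v hv
    rw [map_smul, hone]
    refine Submodule.smul_mem _ _ (add_mem ?_ ?_) <;> refine Submodule.smul_mem _ _ ?_ <;>
      exact Submodule.subset_span (by simp)
  let P' : ℤ → Submodule ℂ V := fun k => Submodule.span ℂ {ρ.Gp 0 (ρ.Gp 1 (u (k - 1)))}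
  have h2' : ∀ k, ρ.B X 2 k ≤ P' k := by
    intro k
    refine ρ.B_succ_induction X 1 k _ (fun a v hv => ?_)
    have hmm : ρ.Gp 0 (ρ.Gp 1 (u (k - 1))) ∈ P' k := Submodule.mem_span_singleton_self _
    obtain ⟨x, y, rfl⟩ := Submodule.mem_span_pair.1 (h1 _ hv)
    rw [map_add, map_smul, map_smul, htwo, htwo']
    exact add_mem (Submodule.smul_mem _ _ (Submodule.smul_mem _ _ hmm))
      (Submodule.smul_mem _ _ (Submodule.smul_mem _ _ hmm))
  have h2 : ∀ k, ρ.B X 2 k ≤ P k := fun k =>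
    (h2' k).trans ((Submodule.span_singleton_le_iff_mem _ _).2 (Submodule.subset_span (by simp)))
  have h3 : ∀ i k, ρ.B X (i + 3) k ≤ ⊥ := by
    intro i
    induction i with
    | zero =>
      intro k
      refine ρ.B_succ_induction X 2 k _ (fun a v hv => ?_)
      obtain ⟨x, rfl⟩ := Submodule.mem_span_singleton.1 (h2' _ hv)
      rw [map_smul, hthree, smul_zero]; exact zero_mem _
    | succ i ih =>
      intro k
      refine ρ.B_succ_induction X (i + 3) k _ (fun a v hv => ?_)
      rw [(Submodule.mem_bot ℂ).1 (ih _ hv), map_zero]; exact zero_mem _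
  have hPQ : (⊤ : Submodule ℂ V) ≤ ⨆ k, (P k ⊔ Q k) := by
    rw [← htop]
    refine iSup_le (fun i => iSup_le (fun k => ?_))
    refine le_iSup_of_le k ?_
    match i with
    | 0 => exact (h0 k).trans le_sup_left
    | 1 => exact (h1 k).trans le_sup_right
    | 2 => exact (h2 k).trans le_sup_left
    | (i + 3) => exact (h3 i k).trans bot_le
  have hPw : ∀ k : ℤ, P k ≤ ρ.wt (lam + k) ⊓ ρ.parity τ := by
    intro k
    refine Submodule.span_le.2 ?_
    rintro v (rfl | rfl)
    · exact ρ.hom_le _ _ _ (hu k)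
    · have := ρ.hom_le _ _ _ (ρ.hom_Gp 0 _ (ρ.hom_Gp 1 _ (hu (k - 1))))
      push_cast at this
      rw [show lam + ((k : ℂ) - 1) + 1 + 0 = lam + k by ring,
        show τ + 1 + 1 = τ by rw [add_assoc, show (1 : ZMod 2) + 1 = 0 by decide, add_zero]] at this
      exact this
  have hQw : ∀ k : ℤ, Q k ≤ ρ.wt (lam + k) ⊓ ρ.parity (τ + 1) := by
    intro k
    refine Submodule.span_le.2 ?_
    rintro v (rfl | rfl)
    · have := ρ.hom_le _ _ _ (ρ.hom_Gp 0 _ (hu k))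
      push_cast at this
      rw [add_zero] at this
      exact this
    · have := ρ.hom_le _ _ _ (ρ.hom_Gp 1 _ (hu (k - 1)))
      push_cast at this
      rw [show lam + ((k : ℂ) - 1) + 1 = lam + k by ring] at this
      exact this
  have hoff : ∀ (k : ℤ) (Y : Submodule ℂ V), lam + (k : ℂ) ≠ μ → P k ⊔ Q k ≤ Y ⊔
      ((⨆ (μ' : ℂ) (_ : μ' ≠ μ), ρ.wt μ') ⊔ (ρ.wt μ ⊓ ρ.parity (t + 1))) := by
    intro k Y hk
    refine le_sup_of_le_right (le_sup_of_le_left ?_)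
    refine le_iSup₂_of_le (lam + (k : ℂ)) hk ?_
    exact sup_le ((hPw k).trans inf_le_left) ((hQw k).trans inf_le_left)
  by_cases hex : ∃ k : ℤ, lam + (k : ℂ) = μ
  · obtain ⟨k, rfl⟩ := hex
    have huniq : ∀ k' : ℤ, k' ≠ k → lam + (k' : ℂ) ≠ lam + k := by
      intro k' hk' h
      exact hk' (by exact_mod_cast add_left_cancel h)
    have aux : ∀ a b : ZMod 2, a = b ∨ a = b + 1 := by decide
    have ht : t = τ ∨ t = τ + 1 := aux t τ
    have hτ : τ + 1 + 1 = τ := by rw [add_assoc, show (1 : ZMod 2) + 1 = 0 by decide, add_zero]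
    rcases ht with rfl | rfl
    · refine (Submodule.rank_mono (ρ.pick (lam + k) t (P k) (hPw k) (hPQ.trans ?_))).trans
        (rank_pair _ _)
      refine iSup_le (fun k' => ?_)
      by_cases hk : k' = k
      · subst hk
        exact sup_le le_sup_left (le_sup_of_le_right (le_sup_of_le_right (hQw k')))
      · exact hoff k' _ (huniq k' hk)
    · refine (Submodule.rank_mono (ρ.pick (lam + k) (τ + 1) (Q k) (hQw k) (hPQ.trans ?_))).trans
        (rank_pair _ _)
      refine iSup_le (fun k' => ?_)
      by_cases hk : k' = k
      · subst hk
        refine sup_le (le_sup_of_le_right (le_sup_of_le_right ?_)) le_sup_left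
        rw [hτ]; exact hPw k'
      · exact hoff k' _ (huniq k' hk)
  · have := ρ.pick μ t ⊥ bot_le (hPQ.trans (iSup_le (fun k' =>
      hoff k' _ (fun h => hex ⟨k', h⟩))))
    refine (Submodule.rank_mono this).trans ?_
    rw [rank_bot]
    simp

end RamondRep

namespace RamondRep

variable {V : Type} [AddCommGroup V] [Module ℂ V]

/-- The mirror involution: `H ↦ -H`, `G⁺ ↔ G⁻`. -/
def swap (ρ : RamondRep V) : RamondRep V where
  L := ρ.L
  H := fun m => -ρ.H m
  Gp := ρ.Gm
  Gm := ρ.Gp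
  c₀ := ρ.c₀
  even := ρ.even
  odd := ρ.odd
  grading := ρ.grading
  L_even := ρ.L_even
  L_odd := ρ.L_odd
  H_even := fun m v hv => neg_mem (ρ.H_even m v hv)
  H_odd := fun m v hv => neg_mem (ρ.H_odd m v hv)
  Gp_even := ρ.Gm_even
  Gp_odd := ρ.Gm_odd
  Gm_even := ρ.Gp_even
  Gm_odd := ρ.Gp_odd
  rel_LL := ρ.rel_LL
  rel_HH := by
    intro m n v
    simp only [LinearMap.neg_apply, map_neg, neg_neg]
    exact ρ.rel_HH m n v
  rel_LH := by
    intro m n v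
    have := ρ.rel_LH m n v
    simp only [LinearMap.neg_apply, map_neg]
    linear_combination (norm := module) -this
  rel_LGp := ρ.rel_LGm
  rel_LGm := ρ.rel_LGp
  rel_HGp := by
    intro m p v
    have := ρ.rel_HGm m p v
    simp only [LinearMap.neg_apply, map_neg]
    linear_combination (norm := module) -this
  rel_HGm := by
    intro m p v
    have := ρ.rel_HGp m p v
    simp only [LinearMap.neg_apply, map_neg]
    linear_combination (norm := module) -this
  rel_GpGm := by
    intro p q v
    have := ρ.rel_GpGm q p v
    rw [add_comm q p] at this
    simp only [LinearMap.neg_apply]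
    have e : ((1 / 3 : ℂ) * ((p : ℂ) ^ 2 - 1 / 4) * (if p + q = 0 then (1 : ℂ) else 0) * ρ.c₀) =
        ((1 / 3 : ℂ) * ((q : ℂ) ^ 2 - 1 / 4) * (if p + q = 0 then (1 : ℂ) else 0) * ρ.c₀) := by
      split_ifs with h
      · have : p = -q := by omega
        subst this
        push_cast; ring
      · ring
    rw [e]
    linear_combination (norm := module) this
  rel_GpGp := ρ.rel_GmGm
  rel_GmGm := ρ.rel_GpGp

theorem swap_simple (ρ : RamondRep V) (h : ρ.IsSimple) : ρ.swap.IsSimple := by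
  refine ⟨fun ht => h.1 (fun m v => ?_), fun W hW => h.2 W ?_⟩
  · obtain ⟨h1, h2, h3, h4⟩ := ht m v
    exact ⟨h1, neg_eq_zero.1 h2, h4, h3⟩
  · obtain ⟨⟨h1, h2, h3, h4⟩, h5⟩ := hW
    exact ⟨⟨h1, fun m v hv => neg_mem_iff.1 (show -(ρ.H m v) ∈ W from h2 m v hv), h4, h3⟩, h5⟩

variable (ρ : RamondRep V)

theorem exists_hom (hV : ∃ v : V, v ≠ 0) (hw : ρ.IsWeight) (hc : ρ.c₀ = 0) (p : ℕ)
    (hp : ∀ (μ : ℂ) (τ : ZMod 2), Module.rank ℂ ↥(ρ.wt μ ⊓ ρ.parity τ) ≤ (p : Cardinal)) :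
    ∃ (μ σ : ℂ) (τ : ZMod 2), ρ.hom μ σ τ ≠ ⊥ := by
  have h1 : ∃ μ, ρ.wt μ ≠ ⊥ := by
    by_contra hall
    push Not at hall
    obtain ⟨v, hv⟩ := hV
    have : v ∈ (⊤ : Submodule ℂ V) := Submodule.mem_top
    rw [← hw] at this
    simp only [hall, iSup_bot, Submodule.mem_bot] at this
    exact hv this
  obtain ⟨μ, hμ⟩ := h1
  obtain ⟨v, hv, hv0⟩ := Submodule.exists_mem_ne_zero_of_ne_bot hμ
  have h2 : ∃ τ, ρ.wt μ ⊓ ρ.parity τ ≠ ⊥ := by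
    have hvt : v ∈ ρ.even ⊔ ρ.odd := by rw [ρ.grading.sup_eq_top]; exact Submodule.mem_top
    obtain ⟨a, ha, b, hb, rfl⟩ := Submodule.mem_sup.1 hvt
    have hL : ρ.L 0 (a + b) = μ • (a + b) := Module.End.mem_eigenspace_iff.1 hv
    have hA : ρ.L 0 a - μ • a ∈ ρ.even := sub_mem (ρ.L_even 0 a ha) (Submodule.smul_mem _ _ ha)
    have hB : ρ.L 0 b - μ • b ∈ ρ.odd := sub_mem (ρ.L_odd 0 b hb) (Submodule.smul_mem _ _ hb)
    have hAB : ρ.L 0 a - μ • a = -(ρ.L 0 b - μ • b) := by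
      rw [map_add] at hL
      linear_combination (norm := module) hL
    have hA0 : ρ.L 0 a - μ • a = 0 :=
      Submodule.disjoint_def.1 ρ.grading.disjoint _ hA (by rw [hAB]; exact neg_mem hB)
    have hB0 : ρ.L 0 b - μ • b = 0 := by
      rw [hA0] at hAB
      exact neg_eq_zero.1 hAB.symm
    by_cases ha0 : a = 0
    · refine ⟨1, (Submodule.ne_bot_iff _).2 ⟨b, ⟨Module.End.mem_eigenspace_iff.2
        (sub_eq_zero.1 hB0), ?_⟩, ?_⟩⟩
      · rw [parity_one]; exact hb
      · rintro rfl
        exact hv0 (by rw [ha0, add_zero])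
    · refine ⟨0, (Submodule.ne_bot_iff _).2 ⟨a, ⟨Module.End.mem_eigenspace_iff.2
        (sub_eq_zero.1 hA0), ?_⟩, ha0⟩⟩
      rw [parity_zero]; exact ha
  obtain ⟨τ, hτ⟩ := h2
  have hst : ∀ x ∈ ρ.wt μ ⊓ ρ.parity τ, ρ.H 0 x ∈ ρ.wt μ ⊓ ρ.parity τ := by
    rintro x ⟨hx1, hx2⟩
    refine ⟨Module.End.mem_eigenspace_iff.2 ?_, ρ.H_parity 0 τ x hx2⟩
    have h3 : ρ.L 0 x = μ • x := Module.End.mem_eigenspace_iff.1 hx1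
    have h4 := ρ.rel_LH 0 0 x
    rw [h3, map_smul, Int.cast_zero, zero_smul] at h4
    exact sub_eq_zero.1 h4
  have := (ρ.fin_of_le hp (le_refl (ρ.wt μ ⊓ ρ.parity τ))).1
  have : Nontrivial ↥(ρ.wt μ ⊓ ρ.parity τ) := Submodule.nontrivial_iff_ne_bot.2 hτ
  obtain ⟨σ, x, hx0, hx, -⟩ := exists_max_eig ((ρ.H 0).restrict hst)
  refine ⟨μ, σ, τ, (Submodule.ne_bot_iff _).2 ⟨x, ?_, fun h => hx0 (Subtype.ext h)⟩⟩
  refine ρ.mem_hom.2 ⟨Module.End.mem_eigenspace_iff.1 x.2.1, ?_, x.2.2⟩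
  exact congrArg Subtype.val hx

theorem exists_hom_ne (hsimple : ρ.IsSimple) (hV : ∃ v : V, v ≠ 0) (hw : ρ.IsWeight)
    (hc : ρ.c₀ = 0) (p : ℕ)
    (hp : ∀ (μ : ℂ) (τ : ZMod 2), Module.rank ℂ ↥(ρ.wt μ ⊓ ρ.parity τ) ≤ (p : Cardinal)) :
    ∃ (μ σ : ℂ) (τ : ZMod 2), σ ≠ 0 ∧ ρ.hom μ σ τ ≠ ⊥ := by
  obtain ⟨μ, σ, τ, hne⟩ := ρ.exists_hom hV hw hc p hp
  by_cases hσ : σ = 0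
  swap
  · exact ⟨μ, σ, τ, hσ, hne⟩
  subst hσ
  obtain ⟨v, hv, hv0⟩ := Submodule.exists_mem_ne_zero_of_ne_bot hne
  by_cases h1 : ∃ m, ρ.Gp m v ≠ 0
  · obtain ⟨m, hm⟩ := h1
    exact ⟨_, 0 + 1, _, by norm_num, (Submodule.ne_bot_iff _).2 ⟨_, ρ.hom_Gp m v hv, hm⟩⟩
  by_cases h2 : ∃ m, ρ.Gm m v ≠ 0
  · obtain ⟨m, hm⟩ := h2
    exact ⟨_, 0 - 1, _, by norm_num, (Submodule.ne_bot_iff _).2 ⟨_, ρ.hom_Gm m v hv, hm⟩⟩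
  push Not at h1 h2
  exfalso
  have hd : ∀ n, ρ.d n v = 0 := by
    intro n
    have := ρ.GmGp hc n 0 v
    rw [h1, h2, map_zero, map_zero, neg_zero, zero_add, Int.cast_zero, mul_zero, zero_smul,
      sub_zero, add_zero] at this
    exact (smul_eq_zero.1 this.symm).resolve_left (by norm_num)
  have hH : ∀ n, ρ.H n v = 0 := by
    intro n
    have := ρ.GmGp hc (n - 1) 1 v
    rw [h1, h2, map_zero, map_zero, neg_zero, zero_add, hd, smul_zero, zero_sub,
      sub_add_cancel] at this
    exact (smul_eq_zero.1 (neg_eq_zero.1 this.symm)).resolve_left (by norm_num)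
  have hL : ∀ n, ρ.L n v = 0 := by
    intro n
    rw [L_apply, hd, hH, smul_zero, add_zero]
  have hz : ∀ (T : V →ₗ[ℂ] V), T v = 0 → ∀ x ∈ Submodule.span ℂ {v}, T x = 0 := by
    intro T hT x hx
    obtain ⟨c, rfl⟩ := Submodule.mem_span_singleton.1 hx
    rw [map_smul, hT, smul_zero]
  have hz' : ∀ (T : V →ₗ[ℂ] V), T v = 0 → ∀ x ∈ Submodule.span ℂ {v},
      T x ∈ Submodule.span ℂ {v} := by
    intro T hT x hx
    rw [hz T hT x hx]; exact zero_mem _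
  have hgr : ρ.IsGradedSubmod (Submodule.span ℂ {v}) := by
    refine ⟨⟨fun m => hz' _ (hL m), fun m => hz' _ (hH m), fun m => hz' _ (h1 m),
      fun m => hz' _ (h2 m)⟩, le_antisymm ?_ (sup_le inf_le_left inf_le_left)⟩
    rw [Submodule.span_singleton_le_iff_mem]
    have hvp := (ρ.mem_hom.1 hv).2.2
    have hvs := Submodule.mem_span_singleton_self (R := ℂ) v
    rcases ρ.parity_le τ with h | h
    · rw [h] at hvp; exact Submodule.mem_sup_left ⟨hvs, hvp⟩
    · rw [h] at hvp; exact Submodule.mem_sup_right ⟨hvs, hvp⟩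
  rcases hsimple.2 _ hgr with h | h
  · exact hv0 (Submodule.span_singleton_eq_bot.1 h)
  · refine hsimple.1 (fun m x => ?_)
    have hx : x ∈ Submodule.span ℂ {v} := by rw [h]; exact Submodule.mem_top
    exact ⟨hz _ (hL m) x hx, hz _ (hH m) x hx, hz _ (h1 m) x hx, hz _ (h2 m) x hx⟩

theorem bound_of_hom (hsimple : ρ.IsSimple) (hc : ρ.c₀ = 0) (p : ℕ)
    (hp : ∀ (μ : ℂ) (τ : ZMod 2), Module.rank ℂ ↥(ρ.wt μ ⊓ ρ.parity τ) ≤ (p : Cardinal))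
    (lam σ : ℂ) (τ : ZMod 2) (hσ : ∀ k : ℕ, σ ≠ k) (hne : ρ.hom lam σ τ ≠ ⊥) (μ : ℂ) (t : ZMod 2) :
    Module.rank ℂ ↥(ρ.wt μ ⊓ ρ.parity t) ≤ 2 := by
  obtain ⟨lam, s, β, τ, u, -, hu0, hu, hG, hH, hd⟩ := ρ.exists_u hc p hp lam σ τ hσ hne
  exact ρ.bound_of_u hsimple hc lam s β τ u hu0 hu hG hH hd μ t

end RamondRep

/-- any simple cuspidal module over the `N = 2` Ramond algebra has
`dim (V_μ ∩ V_τ) ≤ 2` for every weight `μ` and parity `τ`. -/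
theorem stmt8 {V : Type} [AddCommGroup V] [Module ℂ V] (ρ : RamondRep V)
    (hsimple : ρ.IsSimple) (hcusp : ρ.Cuspidal) :
    ∀ (μ : ℂ) (τ : ZMod 2), Module.rank ℂ ↥(ρ.wt μ ⊓ ρ.parity τ) ≤ 2 := by
  intro μ t
  have hV : ∃ v : V, v ≠ 0 := by
    by_contra hall
    push Not at hall
    exact hsimple.1 (fun m v => ⟨hall _, hall _, hall _, hall _⟩)
  have hc := ρ.c_zero hV
  obtain ⟨hw, p, hp⟩ := hcusp
  obtain ⟨lam, σ, τ, hσ, hne⟩ := ρ.exists_hom_ne hsimple hV hw hc p hp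
  by_cases hk : ∃ k : ℕ, σ = k
  · obtain ⟨k, rfl⟩ := hk
    refine ρ.swap.bound_of_hom (ρ.swap_simple hsimple) hc p hp lam (-(k : ℂ)) τ ?_ ?_ μ t
    · intro j hj
      have h1 : ((k + j : ℕ) : ℂ) = 0 := by push_cast; linear_combination -hj
      rw [Nat.cast_eq_zero] at h1
      have h2 : k = 0 := by omega
      exact hσ (by rw [h2, Nat.cast_zero])
    · obtain ⟨v, hv, hv0⟩ := Submodule.exists_mem_ne_zero_of_ne_bot hne
      refine (Submodule.ne_bot_iff _).2 ⟨v, ?_, hv0⟩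
      obtain ⟨h1, h2, h3⟩ := ρ.mem_hom.1 hv
      refine ρ.swap.mem_hom.2 ⟨h1, ?_, h3⟩
      show -(ρ.H 0 v) = _
      rw [h2, neg_smul]
  · exact ρ.bound_of_hom hsimple hc p hp lam σ τ (fun k h => hk ⟨k, h⟩) hne μ t
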